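/- Let X be a reflexive rearrangement invariant space on [0,1] which has the weak Banach-Saks property, and let K : [0,1]×[0,1] → [0,∞] be a measurable kernel such that T_K(χ_{[0,1]}) ∈ X. Then the Banach function space [T_K,X] := {f ∈ L⁰[0,1] : T_K(|f|) ∈ X}, with norm ‖f‖_{[T_K,X]} := ‖T_K(|f|)‖_X, has both the subsequence splitting property and the weak Banach-Saks property. -/

import Mathlib

open MeasureTheory Filter Topology
open scoped ENNReal

noncomputable section

namespace Paper

variable {Ω : Type*} [MeasurableSpace Ω]
variable {X : Type*} [NormedAddCommGroup X] [NormedSpace ℝ X]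

/-- The signed measure `x* ∘ m` for a functional `x*` and vector measure `m`. -/
def dualApply (m : VectorMeasure Ω X) (x : X →L[ℝ] ℝ) : SignedMeasure Ω :=
  m.mapRange x.toLinearMap.toAddMonoidHom x.continuous

/-- The semivariation `‖m‖(A)` of a vector measure. -/
def semivar (m : VectorMeasure Ω X) (A : Set Ω) : ℝ≥0∞ :=
  ⨆ x : {x : X →L[ℝ] ℝ // ‖x‖ ≤ 1}, (dualApply m x.1).totalVariation A

/-- `P` holds `‖m‖`-almost everywhere. -/
def MAE (m : VectorMeasure Ω X) (P : Ω → Prop) : Prop :=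
  ∃ N : Set Ω, MeasurableSet N ∧ semivar m N = 0 ∧ ∀ ω ∉ N, P ω

/-- The integral `∫_A f ds` of a real function with respect to a signed measure. -/
def sIntegral (s : SignedMeasure Ω) (f : Ω → ℝ) (A : Set Ω) : ℝ :=
  (∫ ω in A, f ω ∂s.toJordanDecomposition.posPart) -
    ∫ ω in A, f ω ∂s.toJordanDecomposition.negPart

/-- `f` is integrable with respect to the vector measure `m` (Bartle-Dunford-Schwartz). -/
def MIntegrable (m : VectorMeasure Ω X) (f : Ω → ℝ) : Prop :=
  Measurable f ∧
  (∀ x : X →L[ℝ] ℝ, Integrable f ((dualApply m x).totalVariation)) ∧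
  (∀ A : Set Ω, MeasurableSet A →
    ∃ v : X, ∀ x : X →L[ℝ] ℝ, x v = sIntegral (dualApply m x) f A)

open Classical in
/-- The vector integral `∫_A f dm ∈ X`. -/
def mIntegral (m : VectorMeasure Ω X) (f : Ω → ℝ) (A : Set Ω) : X :=
  if h : ∃ v : X, ∀ x : X →L[ℝ] ℝ, x v = sIntegral (dualApply m x) f A then h.choose
  else 0

/-- The norm of `L¹(m)`: `‖f‖ = sup_{‖x*‖ ≤ 1} ∫ |f| d|x*m|`. -/
def mNorm (m : VectorMeasure Ω X) (f : Ω → ℝ) : ℝ :=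
  ⨆ x : {x : X →L[ℝ] ℝ // ‖x‖ ≤ 1}, ∫ ω, |f ω| ∂(dualApply m x.1).totalVariation

/-- The vector measure `m` is separable: the pseudometric space `(Σ, d_m)`,
`d_m(A,B) = ‖m‖(A △ B)`, is separable. -/
def SeparableVM (m : VectorMeasure Ω X) : Prop :=
  ∃ D : Set (Set Ω), D.Countable ∧ (∀ B ∈ D, MeasurableSet B) ∧
    ∀ A : Set Ω, MeasurableSet A → ∀ ε : ℝ, 0 < ε →
      ∃ B ∈ D, semivar m (symmDiff A B) < ENNReal.ofReal ε

section FunctionSpace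

variable {S : Type*} [MeasurableSpace S]

/-- `T` is a bounded linear functional on the function space determined by the
membership predicate `mem` and the norm `nrm`. -/
def IsBddLinFunctional (mem : (S → ℝ) → Prop) (nrm : (S → ℝ) → ℝ)
    (T : (S → ℝ) → ℝ) : Prop :=
  (∀ f g, mem f → mem g → T (f + g) = T f + T g) ∧
  (∀ (c : ℝ) (f), mem f → T (c • f) = c * T f) ∧
  (∃ C : ℝ, ∀ f, mem f → |T f| ≤ C * nrm f)

/-- `f` is a weakly null sequence in the function space `(mem, nrm)`. -/
def WeaklyNullSeq (mem : (S → ℝ) → Prop) (nrm : (S → ℝ) → ℝ) (f : ℕ → S → ℝ) : Prop :=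
  ∀ T : (S → ℝ) → ℝ, IsBddLinFunctional mem nrm T →
    Tendsto (fun n => T (f n)) atTop (nhds 0)

/-- The set `K` has uniformly absolutely continuous norm in the function space with
norm `nrm` over the measure `μ`. -/
def UnifACNorm (μ : Measure S) (nrm : (S → ℝ) → ℝ) (K : Set (S → ℝ)) : Prop :=
  ∀ ε : ℝ, 0 < ε → ∃ δ : ℝ, 0 < δ ∧ ∀ A : Set S, MeasurableSet A →
    μ A < ENNReal.ofReal δ → ∀ f ∈ K, nrm (A.indicator f) ≤ ε

/-- The subsequence splitting property for the function space `(mem, nrm)` over `μ`. -/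
def HasSSP (μ : Measure S) (mem : (S → ℝ) → Prop) (nrm : (S → ℝ) → ℝ) : Prop :=
  ∀ f : ℕ → S → ℝ, (∀ n, mem (f n)) → (∃ C : ℝ, ∀ n, nrm (f n) ≤ C) →
    ∃ σ : ℕ → ℕ, StrictMono σ ∧
      ∃ g h : ℕ → S → ℝ,
        (∀ n, mem (g n)) ∧ (∀ n, mem (h n)) ∧
        (∀ n, f (σ n) = g n + h n) ∧
        (∀ n, (fun s => g n s * h n s) =ᵐ[μ] 0) ∧
        UnifACNorm μ nrm (Set.range g) ∧
        (∀ i j, i ≠ j → (fun s => h i s * h j s) =ᵐ[μ] 0)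

/-- The weak Banach-Saks property for the function space `(mem, nrm)`. -/
def HasWBS (mem : (S → ℝ) → Prop) (nrm : (S → ℝ) → ℝ) : Prop :=
  ∀ f : ℕ → S → ℝ, (∀ n, mem (f n)) → WeaklyNullSeq mem nrm f →
    ∃ σ : ℕ → ℕ, StrictMono σ ∧
      Tendsto (fun n : ℕ => nrm ((n : ℝ)⁻¹ • ∑ k ∈ Finset.range n, f (σ k))) atTop (nhds 0)

end FunctionSpace

/-- A Banach function space over `(S, μ)`: an (abstract) normed space `X` together with
a linear embedding `J` into measurable functions on `S`, separating points modulo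
`μ`-null sets and satisfying the ideal property. -/
structure BFS (S : Type*) [MeasurableSpace S] (μ : Measure S)
    (X : Type*) [NormedAddCommGroup X] [NormedSpace ℝ X] where
  J : X →ₗ[ℝ] (S → ℝ)
  aemeasurable : ∀ x : X, AEMeasurable (J x) μ
  eq_zero : ∀ x : X, J x =ᵐ[μ] 0 → x = 0
  ideal : ∀ (x : X) (g : S → ℝ), AEMeasurable g μ →
    (∀ᵐ s ∂μ, |g s| ≤ |J x s|) → ∃ y : X, J y =ᵐ[μ] g ∧ ‖y‖ ≤ ‖x‖

variable {S : Type*} [MeasurableSpace S] {μ : Measure S}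

/-- The set `K ⊆ X` has uniformly absolutely continuous norm in the B.f.s. `X`. -/
def BFS.UnifAC (B : BFS S μ X) (K : Set X) : Prop :=
  ∀ ε : ℝ, 0 < ε → ∃ δ : ℝ, 0 < δ ∧ ∀ A : Set S, MeasurableSet A →
    μ A < ENNReal.ofReal δ → ∀ x ∈ K, ∀ y : X, B.J y =ᵐ[μ] A.indicator (B.J x) → ‖y‖ ≤ ε

/-- The B.f.s. `X` has absolutely continuous norm. -/
def BFS.ACNorm (B : BFS S μ X) : Prop :=
  ∀ x : X, ∀ ε : ℝ, 0 < ε → ∃ δ : ℝ, 0 < δ ∧ ∀ A : Set S, MeasurableSet A →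
    μ A < ENNReal.ofReal δ → ∀ y : X, B.J y =ᵐ[μ] A.indicator (B.J x) → ‖y‖ ≤ ε

/-- The subsequence splitting property for the B.f.s. `X`. -/
def BFS.SSP (B : BFS S μ X) : Prop :=
  ∀ f : ℕ → X, (∃ C : ℝ, ∀ n, ‖f n‖ ≤ C) →
    ∃ σ : ℕ → ℕ, StrictMono σ ∧
      ∃ g h : ℕ → X,
        (∀ n, f (σ n) = g n + h n) ∧
        (∀ n, (fun s => B.J (g n) s * B.J (h n) s) =ᵐ[μ] 0) ∧
        B.UnifAC (Set.range g) ∧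
        (∀ i j, i ≠ j → (fun s => B.J (h i) s * B.J (h j) s) =ᵐ[μ] 0)

/-- The weak Banach-Saks property for a normed space `Z`: every weakly null sequence has a
subsequence whose arithmetic means converge to zero in norm. -/
def WeakBanachSaks (Z : Type*) [NormedAddCommGroup Z] [NormedSpace ℝ Z] : Prop :=
  ∀ z : ℕ → Z, (∀ φ : Z →L[ℝ] ℝ, Tendsto (fun n => φ (z n)) atTop (nhds 0)) →
    ∃ σ : ℕ → ℕ, StrictMono σ ∧
      Tendsto (fun n : ℕ => ‖(n : ℝ)⁻¹ • ∑ k ∈ Finset.range n, z (σ k)‖) atTop (nhds 0)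


/-- Lebesgue measure on `[0,1]`. -/
def mu01 : Measure ℝ := volume.restrict (Set.Icc (0 : ℝ) 1)

/-- The B.f.s. `X` on `[0,1]` is rearrangement invariant: if the distribution function of a
measurable `g` is dominated by that of (the function representing) `x ∈ X` (equivalently,
`g* ≤ (J x)*`), then `g` represents an element `y ∈ X` with `‖y‖ ≤ ‖x‖`. -/
def BFS.RI {X : Type*} [NormedAddCommGroup X] [NormedSpace ℝ X]
    (B : BFS ℝ mu01 X) : Prop :=
  ∀ (x : X) (g : ℝ → ℝ), AEMeasurable g mu01 →
    (∀ τ : ℝ, 0 < τ → mu01 {s | τ < |g s|} ≤ mu01 {s | τ < |B.J x s|}) →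
    ∃ y : X, B.J y =ᵐ[mu01] g ∧ ‖y‖ ≤ ‖x‖

/-- The kernel operator `T_K` applied to `|f|`: `T_K(|f|)(s) = ∫₀¹ K(s,y) |f(y)| dy`. -/
def TKabs (K : ℝ → ℝ → ℝ≥0∞) (f : ℝ → ℝ) (s : ℝ) : ℝ≥0∞ :=
  ∫⁻ y in Set.Icc (0 : ℝ) 1, K s y * ENNReal.ofReal |f y|

/-- Membership in the optimal domain `[T_K, X] = {f : T_K(|f|) ∈ X}`. -/
def memTK {X : Type*} [NormedAddCommGroup X] [NormedSpace ℝ X]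
    (B : BFS ℝ mu01 X) (K : ℝ → ℝ → ℝ≥0∞) (f : ℝ → ℝ) : Prop :=
  AEMeasurable f mu01 ∧
    ∃ x : X, ∀ᵐ s ∂mu01, TKabs K f s ≠ ⊤ ∧ (TKabs K f s).toReal = B.J x s

/-- The norm `‖f‖_{[T_K,X]} = ‖T_K(|f|)‖_X` on the optimal domain. -/
def nrmTK {X : Type*} [NormedAddCommGroup X] [NormedSpace ℝ X]
    (B : BFS ℝ mu01 X) (K : ℝ → ℝ → ℝ≥0∞) (f : ℝ → ℝ) : ℝ :=
  sInf {r : ℝ | ∃ x : X,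
    (∀ᵐ s ∂mu01, TKabs K f s ≠ ⊤ ∧ (TKabs K f s).toReal = B.J x s) ∧ r = ‖x‖}

section XLevel

variable {X : Type*} [NormedAddCommGroup X] [NormedSpace ℝ X]

instance instFinMu01 : IsFiniteMeasure mu01 := by
  unfold mu01; infer_instance

lemma norm_le_of_abs_le (B : BFS ℝ mu01 X) {x y : X}
    (h : ∀ᵐ s ∂mu01, |B.J y s| ≤ |B.J x s|) : ‖y‖ ≤ ‖x‖ := by
  obtain ⟨z, hz, hzn⟩ := B.ideal x (B.J y) (B.aemeasurable y) h
  have : z = y := by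
    rw [← sub_eq_zero]
    apply B.eq_zero
    filter_upwards [hz] with s hs
    simp [hs]
  rwa [← this]

lemma J_inj (B : BFS ℝ mu01 X) {x y : X} (h : B.J x =ᵐ[mu01] B.J y) : x = y := by
  rw [← sub_eq_zero]
  apply B.eq_zero
  filter_upwards [h] with s hs
  simp [hs]

/-- order -/
def Xle (B : BFS ℝ mu01 X) (x y : X) : Prop := ∀ᵐ s ∂mu01, B.J x s ≤ B.J y s

lemma Xle_of_tendsto (B : BFS ℝ mu01 X) {x : X} {y : ℕ → X} {z : X}
    (h : ∀ n, Xle B x (y n)) (hy : Tendsto y atTop (𝓝 z)) : Xle B x z := by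
  obtain ⟨w, hw, -⟩ := B.ideal (z - x) (fun s => max 0 (-(B.J (z - x) s)))
    (aemeasurable_const.max (B.aemeasurable _).neg) (by
      filter_upwards with s
      rw [abs_of_nonneg (le_max_left _ _)]
      exact max_le (abs_nonneg _) (neg_le_abs _))
  have h1 : ∀ n, ‖w‖ ≤ ‖z - y n‖ := by
    intro n
    apply norm_le_of_abs_le B
    filter_upwards [hw, h n] with s hs hn
    rw [hs, abs_of_nonneg (le_max_left _ _)]
    refine max_le (abs_nonneg _) ?_
    refine le_trans ?_ (neg_le_abs _)
    simp only [map_sub, Pi.sub_apply]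
    linarith
  have h2 : Tendsto (fun n => ‖z - y n‖) atTop (𝓝 0) := by
    have := (tendsto_const_nhds (x := z)).sub hy
    simpa using this.norm
  have h3 : ‖w‖ ≤ 0 := ge_of_tendsto' h2 h1
  have h4 : w = 0 := by simpa using h3
  subst h4
  filter_upwards [hw] with s hs
  simp only [map_zero, map_sub, Pi.sub_apply, Pi.zero_apply] at hs
  have := le_max_right 0 (-(B.J z s - B.J x s))
  rw [← hs] at this
  linarith

lemma Xle_convex (B : BFS ℝ mu01 X) (x : X) : Convex ℝ {z | Xle B x z} := by
  intro a ha b hb p q hp hq hpq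
  simp only [Set.mem_ofPred_eq, Xle] at *
  filter_upwards [ha, hb] with s h1 h2
  simp only [map_add, map_smul, Pi.add_apply, Pi.smul_apply, smul_eq_mul]
  have e : B.J x s = p * B.J x s + q * B.J x s := by rw [← add_mul, hpq, one_mul]
  have := mul_le_mul_of_nonneg_left h1 hp
  have := mul_le_mul_of_nonneg_left h2 hq
  linarith

lemma Xge_convex (B : BFS ℝ mu01 X) (x : X) : Convex ℝ {z | Xle B z x} := by
  intro a ha b hb p q hp hq hpq
  simp only [Set.mem_ofPred_eq, Xle] at *
  filter_upwards [ha, hb] with s h1 h2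
  simp only [map_add, map_smul, Pi.add_apply, Pi.smul_apply, smul_eq_mul]
  have e : B.J x s = p * B.J x s + q * B.J x s := by rw [← add_mul, hpq, one_mul]
  have := mul_le_mul_of_nonneg_left h1 hp
  have := mul_le_mul_of_nonneg_left h2 hq
  linarith

lemma weak_cluster (hrefl : Function.Surjective (NormedSpace.inclusionInDoubleDual ℝ X))
    (x : ℕ → X) (C : ℝ) (hC : ∀ n, ‖x n‖ ≤ C) :
    ∃ y : X, ∀ m, y ∈ closure (convexHull ℝ {z | ∃ k ≥ m, z = x k}) := by
  let U : Ultrafilter ℕ := Ultrafilter.of atTop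
  have hU : (U : Filter ℕ) ≤ atTop := Ultrafilter.of_le _
  let ξ : ℕ → WeakDual ℝ (StrongDual ℝ X) := fun n =>
    StrongDual.toWeakDual (NormedSpace.inclusionInDoubleDual ℝ X (x n))
  have hc := WeakDual.isCompact_closedBall (𝕜 := ℝ) (E := StrongDual ℝ X) 0 C
  have hmem : ∀ n, ξ n ∈ (WeakDual.toStrongDual ⁻¹' Metric.closedBall (0 : StrongDual ℝ (StrongDual ℝ X)) C) := by
    intro n
    exact (mem_closedBall_zero_iff (E := StrongDual ℝ (StrongDual ℝ X))).2
      ((NormedSpace.double_dual_bound ℝ X (x n)).trans (hC n))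
  obtain ⟨Λ, -, hΛ⟩ := hc.ultrafilter_le_nhds (U.map ξ) (by
    simp only [Ultrafilter.coe_map, le_principal_iff]
    exact Filter.mem_map.2 (Filter.univ_mem' hmem))
  obtain ⟨y, hy⟩ := hrefl (WeakDual.toStrongDual Λ)
  have hconv : ∀ φ : StrongDual ℝ X, Tendsto (fun n => φ (x n)) U (𝓝 (φ y)) := by
    intro φ
    have h1 : Tendsto (fun Ψ : WeakDual ℝ (StrongDual ℝ X) => Ψ φ) (𝓝 Λ) (𝓝 (Λ φ)) :=
      (WeakDual.eval_continuous φ).tendsto Λ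
    have h2 : Tendsto ξ U (𝓝 Λ) := hΛ
    have h3 := h1.comp h2
    have h4 : Λ φ = φ y := by
      rw [← NormedSpace.dual_def, hy]; rfl
    rw [h4] at h3
    exact h3
  refine ⟨y, fun m => ?_⟩
  by_contra hn
  obtain ⟨φ, u, h1, h2⟩ := geometric_hahn_banach_closed_point
    (convex_convexHull ℝ {z | ∃ k ≥ m, z = x k}).closure isClosed_closure hn
  have h3 : ∀ᶠ n in (U : Filter ℕ), φ (x n) ≤ u := by
    apply hU
    filter_upwards [eventually_ge_atTop m] with n hn
    exact (h1 _ (subset_closure (subset_convexHull ℝ _ ⟨n, hn, rfl⟩))).le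
  exact absurd (le_of_tendsto (hconv φ) h3) (not_le.2 h2)

lemma KB_X (B : BFS ℝ mu01 X)
    (hrefl : Function.Surjective (NormedSpace.inclusionInDoubleDual ℝ X))
    (x : ℕ → X) (C : ℝ) (hC : ∀ n, ‖x n‖ ≤ C) (hmono : ∀ m n, m ≤ n → Xle B (x m) (x n)) :
    ∃ y, Tendsto x atTop (𝓝 y) ∧ ∀ n, Xle B (x n) y := by
  obtain ⟨y, hy⟩ := weak_cluster hrefl x C hC
  have hle : ∀ n, Xle B (x n) y := by
    intro n
    obtain ⟨c, hc, hcy⟩ := mem_closure_iff_seq_limit.1 (hy n)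
    refine Xle_of_tendsto B (fun k => ?_) hcy
    have : convexHull ℝ {z | ∃ k ≥ n, z = x k} ⊆ {z | Xle B (x n) z} := by
      apply convexHull_min _ (Xle_convex B (x n))
      rintro z ⟨k, hk, rfl⟩
      exact hmono _ _ hk
    exact this (hc k)
  refine ⟨y, ?_, hle⟩
  rw [Metric.tendsto_atTop]
  intro ε hε
  obtain ⟨c, hc, hcy⟩ := Metric.mem_closure_iff.1 (hy 0) ε hε
  have hN : ∃ N, Xle B c (x N) := by
    have : convexHull ℝ {z | ∃ k ≥ 0, z = x k} ⊆ {z | ∃ N, Xle B z (x N)} := by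
      apply convexHull_min
      · rintro z ⟨k, -, rfl⟩
        exact ⟨k, hmono _ _ le_rfl⟩
      · rintro a ⟨N, hN⟩ b ⟨M, hM⟩ p q hp hq hpq
        refine ⟨max N M, Xge_convex B _ ?_ ?_ hp hq hpq⟩
        · filter_upwards [hN, hmono _ _ (le_max_left N M)] with s h1 h2 using h1.trans h2
        · filter_upwards [hM, hmono _ _ (le_max_right N M)] with s h1 h2 using h1.trans h2
    exact this hc
  obtain ⟨N, hN⟩ := hN
  refine ⟨N, fun n hn => ?_⟩
  rw [dist_comm, dist_eq_norm]
  refine lt_of_le_of_lt ?_ (by rwa [dist_eq_norm] at hcy : ‖y - c‖ < ε)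
  apply norm_le_of_abs_le B
  filter_upwards [hN, hmono _ _ hn, hle n] with s h1 h2 h3
  simp only [map_sub, Pi.sub_apply]
  rw [abs_of_nonneg (by linarith), abs_of_nonneg (by linarith)]
  linarith

/-- representation -/
def Rep (B : BFS ℝ mu01 X) (F : ℝ → ℝ≥0∞) (x : X) : Prop :=
  ∀ᵐ s ∂mu01, F s ≠ ⊤ ∧ (F s).toReal = B.J x s

/-- extended function norm -/
def rho (B : BFS ℝ mu01 X) (F : ℝ → ℝ≥0∞) : ℝ≥0∞ := ⨅ x : {x : X // Rep B F x}, ‖x.1‖ₑ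

variable {B : BFS ℝ mu01 X}

lemma Rep.unique {F : ℝ → ℝ≥0∞} {x y : X} (hx : Rep B F x) (hy : Rep B F y) : x = y := by
  apply J_inj B
  filter_upwards [hx, hy] with s h1 h2
  rw [← h1.2, h2.2]

lemma Rep.rho_eq {F : ℝ → ℝ≥0∞} {x : X} (hx : Rep B F x) : rho B F = ‖x‖ₑ := by
  apply le_antisymm
  · exact iInf_le (fun x : {x : X // Rep B F x} => ‖x.1‖ₑ) ⟨x, hx⟩
  · refine le_iInf fun y => ?_
    rw [hx.unique y.2]

lemma exists_rep {F : ℝ → ℝ≥0∞} (h : rho B F ≠ ⊤) : ∃ x, Rep B F x := by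
  by_contra hn
  apply h
  have : IsEmpty {x : X // Rep B F x} := ⟨fun x => hn ⟨x.1, x.2⟩⟩
  simp [rho]

lemma Rep.aemeasurable {F : ℝ → ℝ≥0∞} {x : X} (hx : Rep B F x) : AEMeasurable F mu01 := by
  refine (B.aemeasurable x).ennreal_ofReal.congr ?_
  filter_upwards [hx] with s hs
  rw [← hs.2, ENNReal.ofReal_toReal hs.1]

lemma rep_ofReal {x : X} {F : ℝ → ℝ≥0∞} (h0 : ∀ᵐ s ∂mu01, 0 ≤ B.J x s)
    (h : ∀ᵐ s ∂mu01, F s = ENNReal.ofReal (B.J x s)) : Rep B F x := by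
  filter_upwards [h0, h] with s h1 h2
  simp [h2, h1]

lemma rho_ne_top_ae {F : ℝ → ℝ≥0∞} (h : rho B F ≠ ⊤) : ∀ᵐ s ∂mu01, F s ≠ ⊤ := by
  obtain ⟨x, hx⟩ := exists_rep h
  filter_upwards [hx] with s hs using hs.1

lemma rho_mono {F G : ℝ → ℝ≥0∞} (hF : AEMeasurable F mu01) (h : ∀ᵐ s ∂mu01, F s ≤ G s) :
    rho B F ≤ rho B G := by
  by_cases hG : rho B G = ⊤
  · simp [hG]
  obtain ⟨x, hx⟩ := exists_rep hG
  obtain ⟨y, hy, hyn⟩ := B.ideal x (fun s => (F s).toReal) hF.ennreal_toReal (by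
    filter_upwards [h, hx] with s h1 h2
    rw [← h2.2, abs_of_nonneg ENNReal.toReal_nonneg, abs_of_nonneg ENNReal.toReal_nonneg]
    exact ENNReal.toReal_mono h2.1 h1)
  have hr : Rep B F y := by
    filter_upwards [h, hx, hy] with s h1 h2 h3
    exact ⟨ne_top_of_le_ne_top h2.1 h1, h3.symm⟩
  rw [hr.rho_eq, hx.rho_eq]
  rwa [enorm_le_iff_norm_le]

lemma rho_congr {F G : ℝ → ℝ≥0∞} (h : F =ᵐ[mu01] G) : rho B F = rho B G := by
  have : ∀ x, Rep B F x ↔ Rep B G x := by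
    intro x
    apply Filter.eventually_congr
    filter_upwards [h] with s hs
    rw [hs]
  exact le_antisymm (le_iInf fun x => iInf_le (fun x : {x : X // Rep B F x} => ‖x.1‖ₑ)
      ⟨x.1, (this x.1).2 x.2⟩) (le_iInf fun x =>
      iInf_le (fun x : {x : X // Rep B G x} => ‖x.1‖ₑ) ⟨x.1, (this x.1).1 x.2⟩)

lemma rep_add {F G : ℝ → ℝ≥0∞} {x y : X} (hx : Rep B F x) (hy : Rep B G y) :
    Rep B (fun s => F s + G s) (x + y) := by
  filter_upwards [hx, hy] with s h1 h2
  refine ⟨ENNReal.add_ne_top.2 ⟨h1.1, h2.1⟩, ?_⟩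
  rw [ENNReal.toReal_add h1.1 h2.1, h1.2, h2.2]; simp

lemma rep_zero : Rep B (fun _ => 0) (0 : X) := by
  filter_upwards with s; simp

lemma rho_zero : rho B (fun _ => 0) = 0 := by
  rw [rep_zero.rho_eq]; simp

lemma rho_add_le (F G : ℝ → ℝ≥0∞) :
    rho B (fun s => F s + G s) ≤ rho B F + rho B G := by
  by_cases hF : rho B F = ⊤
  · simp [hF]
  by_cases hG : rho B G = ⊤
  · simp [hG]
  obtain ⟨x, hx⟩ := exists_rep hF
  obtain ⟨y, hy⟩ := exists_rep hG
  rw [(rep_add hx hy).rho_eq, hx.rho_eq, hy.rho_eq]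
  exact enorm_add_le x y

lemma rho_const_mul {c : ℝ≥0∞} (hc : c ≠ ⊤) (F : ℝ → ℝ≥0∞) :
    rho B (fun s => c * F s) ≤ c * rho B F := by
  by_cases hc0 : c = 0
  · subst hc0; simp [rho_zero]
  by_cases hF : rho B F = ⊤
  · simp [hF, ENNReal.mul_top hc0]
  obtain ⟨x, hx⟩ := exists_rep hF
  have : Rep B (fun s => c * F s) (c.toReal • x) := by
    filter_upwards [hx] with s hs
    refine ⟨ENNReal.mul_ne_top hc hs.1, ?_⟩
    simp [hs.2]
  rw [this.rho_eq, hx.rho_eq, enorm_smul]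
  gcongr
  rw [Real.enorm_of_nonneg ENNReal.toReal_nonneg, ENNReal.ofReal_toReal hc]

lemma rho_sum_le {ι : Type*} (t : Finset ι) (F : ι → ℝ → ℝ≥0∞) :
    rho B (fun s => ∑ i ∈ t, F i s) ≤ ∑ i ∈ t, rho B (F i) := by
  classical
  induction t using Finset.induction_on with
  | empty => simp [rho_zero]
  | insert a t ha ih =>
    simp only [Finset.sum_insert ha]
    exact (rho_add_le _ _).trans (by gcongr)

lemma rho_KB (hrefl : Function.Surjective (NormedSpace.inclusionInDoubleDual ℝ X))
    (F : ℕ → ℝ → ℝ≥0∞) (C : ℝ≥0∞) (hC : C ≠ ⊤) (hF : ∀ n, rho B (F n) ≤ C)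
    (hmono : ∀ᵐ s ∂mu01, Monotone fun n => F n s) :
    rho B (fun s => ⨆ n, F n s) ≤ C ∧
    Tendsto (fun n => rho B (fun s => (⨆ n, F n s) - F n s)) atTop (𝓝 0) := by
  choose x hx using fun n => exists_rep (ne_top_of_le_ne_top hC (hF n))
  have hxn : ∀ n, ‖x n‖ₑ ≤ C := fun n => (hx n).rho_eq ▸ hF n
  have hx0 : ∀ n, ∀ᵐ s ∂mu01, 0 ≤ B.J (x n) s := fun n => by
    filter_upwards [hx n] with s hs
    rw [← hs.2]; exact ENNReal.toReal_nonneg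
  have hxn' : ∀ n, ‖x n‖ ≤ C.toReal := by
    intro n
    rw [← toReal_enorm]
    exact ENNReal.toReal_mono hC (hxn n)
  obtain ⟨y, hy, hxy⟩ := KB_X B hrefl x C.toReal hxn' (by
    intro m n hmn
    filter_upwards [hx m, hx n, hmono] with s h1 h2 h3
    rw [← h1.2, ← h2.2]
    exact ENNReal.toReal_mono h2.1 (h3 hmn))
  have hy0 : ∀ᵐ s ∂mu01, 0 ≤ B.J y s := by
    filter_upwards [hxy 0, hx0 0] with s h1 h2 using h2.trans h1
  have hFle : ∀ᵐ s ∂mu01, (⨆ n, F n s) ≤ ENNReal.ofReal (B.J y s) := by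
    filter_upwards [ae_all_iff.2 hx, ae_all_iff.2 hxy] with s h1 h2
    refine iSup_le fun n => ?_
    rw [← ENNReal.ofReal_toReal (h1 n).1, (h1 n).2]
    exact ENNReal.ofReal_le_ofReal (h2 n)
  have hmeas : AEMeasurable (fun s => ⨆ n, F n s) mu01 :=
    AEMeasurable.iSup fun n => (hx n).aemeasurable
  have hyr : Rep B (fun s => ENNReal.ofReal (B.J y s)) y :=
    rep_ofReal hy0 (Filter.Eventually.of_forall fun s => rfl)
  have hfin : rho B (fun s => ⨆ n, F n s) ≠ ⊤ := by
    refine ne_top_of_le_ne_top ?_ (rho_mono hmeas hFle)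
    rw [hyr.rho_eq]; exact enorm_ne_top
  obtain ⟨z, hz⟩ := exists_rep hfin
  have hz2 : Xle B 0 (z - y) := by
    refine Xle_of_tendsto B (y := fun n => z - x n) (fun n => ?_) (tendsto_const_nhds.sub hy)
    filter_upwards [hz, hx n] with s h1 h2
    simp only [map_zero, map_sub, Pi.zero_apply, Pi.sub_apply, ← h1.2, ← h2.2, sub_nonneg]
    exact ENNReal.toReal_mono h1.1 (le_iSup (fun n => F n s) n)
  have hyz : y = z := by
    apply J_inj B
    filter_upwards [hz2, hFle, hz, hy0] with s h1 h2 h3 h4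
    simp only [map_zero, map_sub, Pi.zero_apply, Pi.sub_apply] at h1
    apply le_antisymm (by linarith)
    rw [← h3.2]
    exact ENNReal.toReal_le_of_le_ofReal h4 h2
  subst hyz
  constructor
  · rw [hz.rho_eq]
    exact le_of_tendsto' (hy.enorm) hxn
  · have : ∀ n, rho B (fun s => (⨆ n, F n s) - F n s) = ‖y - x n‖ₑ := by
      intro n
      apply Rep.rho_eq
      filter_upwards [hz, hx n] with s h1 h2
      refine ⟨ne_top_of_le_ne_top h1.1 tsub_le_self, ?_⟩
      rw [ENNReal.toReal_sub_of_le (le_iSup (fun n => F n s) n) h1.1, h1.2, h2.2]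
      simp
    simp only [this]
    have h := ((tendsto_const_nhds (x := y)).sub hy).enorm
    simpa using h

lemma rho_OC (hrefl : Function.Surjective (NormedSpace.inclusionInDoubleDual ℝ X))
    (F : ℕ → ℝ → ℝ≥0∞) (hm : ∀ n, AEMeasurable (F n) mu01) (h0 : rho B (F 0) ≠ ⊤)
    (hanti : ∀ᵐ s ∂mu01, Antitone fun n => F n s)
    (hinf : ∀ᵐ s ∂mu01, Tendsto (fun n => F n s) atTop (𝓝 0)) :
    Tendsto (fun n => rho B (F n)) atTop (𝓝 0) := by
  have h := (rho_KB hrefl (fun n s => F 0 s - F n s) _ h0 (fun n => rho_mono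
    ((hm 0).sub (hm n)) (Filter.Eventually.of_forall fun s => tsub_le_self)) (by
    filter_upwards [hanti] with s hs m n hmn
    exact tsub_le_tsub_left (hs hmn) _)).2
  refine h.congr fun n => rho_congr ?_
  filter_upwards [rho_ne_top_ae h0, hanti, hinf] with s h1 h2 h3
  have : (⨆ n, (F 0 s - F n s)) = F 0 s := by
    have h4 : Tendsto (fun n => F 0 s - F n s) atTop (𝓝 (F 0 s - 0)) :=
      ENNReal.Tendsto.sub tendsto_const_nhds h3 (Or.inl h1)
    rw [tsub_zero] at h4
    exact tendsto_nhds_unique (tendsto_atTop_iSup fun m n hmn => tsub_le_tsub_left (h2 hmn) _) h4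
  rw [this]
  exact ENNReal.sub_sub_cancel h1 (h2 (Nat.zero_le n))

lemma rho_tsum_le (hrefl : Function.Surjective (NormedSpace.inclusionInDoubleDual ℝ X))
    (F : ℕ → ℝ → ℝ≥0∞) :
    rho B (fun s => ∑' k, F k s) ≤ ∑' k, rho B (F k) := by
  by_cases h : ∑' k, rho B (F k) = ⊤
  · simp [h]
  have := (rho_KB (B := B) hrefl (fun n s => ∑ k ∈ Finset.range n, F k s) _ h (fun n =>
    (rho_sum_le _ _).trans (ENNReal.sum_le_tsum _)) (Filter.Eventually.of_forall fun s m n hmn =>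
      Finset.sum_le_sum_of_subset (Finset.range_mono hmn))).1
  simpa [ENNReal.tsum_eq_iSup_nat] using this

lemma rho_tail (hrefl : Function.Surjective (NormedSpace.inclusionInDoubleDual ℝ X))
    (b : ℕ → ℝ → ℝ≥0∞) (C : ℝ≥0∞) (hC : C ≠ ⊤) (hm : ∀ n, AEMeasurable (b n) mu01)
    (hb : ∀ m, rho B (fun s => ∑ i ∈ Finset.range m, b i s) ≤ C) (ε : ℝ≥0∞) (hε : 0 < ε) :
    ∃ j0, ∀ j, j0 ≤ j → ∀ m, rho B (fun s => ∑ i ∈ Finset.Ico j m, b i s) ≤ ε := by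
  have h := (rho_KB (B := B) hrefl (fun n s => ∑ k ∈ Finset.range n, b k s) C hC hb
    (Filter.Eventually.of_forall fun s m n hmn =>
      Finset.sum_le_sum_of_subset (Finset.range_mono hmn))).2
  have h2 := (h.eventually (gt_mem_nhds hε))
  obtain ⟨j0, hj0⟩ := eventually_atTop.1 h2
  refine ⟨j0, fun j hj m => ?_⟩
  refine le_trans (rho_mono ?_ ?_) (hj0 j hj).le
  · exact Finset.aemeasurable_fun_sum _ fun i _ => hm i
  · filter_upwards [rho_ne_top_ae (ne_top_of_le_ne_top hC (hb j))] with s hs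
    rcases le_total m j with hmj | hmj
    · simp [Finset.Ico_eq_empty_of_le hmj]
    · refine ENNReal.le_sub_of_add_le_right hs ?_
      rw [add_comm, Finset.sum_range_add_sum_Ico _ hmj]
      exact le_iSup (fun n => ∑ k ∈ Finset.range n, b k s) m

lemma rho_ri (hRI : B.RI) {F G : ℝ → ℝ≥0∞} (hF : AEMeasurable F mu01) (hF1 : ∀ s, F s ≠ ⊤)
    (h : ∀ τ : ℝ≥0∞, τ ≠ ⊤ → mu01 {s | τ < F s} ≤ mu01 {s | τ < G s}) :
    rho B F ≤ rho B G := by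
  by_cases hG : rho B G = ⊤
  · simp [hG]
  obtain ⟨x, hx⟩ := exists_rep hG
  obtain ⟨y, hy, hyn⟩ := hRI x (fun s => (F s).toReal) hF.ennreal_toReal (by
    intro τ hτ
    have e1 : {s | τ < |(F s).toReal|} = {s | ENNReal.ofReal τ < F s} := by
      ext s
      simp only [Set.mem_ofPred_eq]
      rw [abs_of_nonneg ENNReal.toReal_nonneg, ENNReal.ofReal_lt_iff_lt_toReal hτ.le (hF1 s)]
    rw [e1]
    refine (h _ ENNReal.ofReal_ne_top).trans (measure_mono_ae ?_)
    filter_upwards [hx] with s hs (hs2 : ENNReal.ofReal τ < G s)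
    show τ < |B.J x s|
    rw [← hs.2, abs_of_nonneg ENNReal.toReal_nonneg]
    exact (ENNReal.ofReal_lt_iff_lt_toReal hτ.le hs.1).1 hs2)
  have hr : Rep B F y := by
    filter_upwards [hy] with s h3
    exact ⟨hF1 s, h3.symm⟩
  rw [hr.rho_eq, hx.rho_eq]
  rwa [enorm_le_iff_norm_le]

end XLevel

section QLevel

variable {X : Type*} [NormedAddCommGroup X] [NormedSpace ℝ X]
variable {B : BFS ℝ mu01 X}

lemma rho_eq_zero {F : ℝ → ℝ≥0∞} (h : rho B F = 0) : ∀ᵐ s ∂mu01, F s = 0 := by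
  obtain ⟨x, hx⟩ := exists_rep (B := B) (F := F) (by simp [h])
  rw [hx.rho_eq] at h
  have : x = 0 := by simpa using h
  subst this
  filter_upwards [hx] with s hs
  have := hs.2
  simp only [map_zero, Pi.zero_apply] at this
  rcases (ENNReal.toReal_eq_zero_iff _).1 this with h | h
  · exact h
  · exact absurd h hs.1

lemma mu01_univ : mu01 Set.univ = 1 := by simp [mu01]

/-- initial interval of length t -/
def It (t : ℝ≥0∞) : Set ℝ := {s | 0 ≤ s ∧ ENNReal.ofReal s < t}

lemma measurableSet_It (t : ℝ≥0∞) : MeasurableSet (It t) := by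
  unfold It
  exact (measurableSet_le measurable_const measurable_id).inter
    (measurableSet_lt ENNReal.measurable_ofReal measurable_const)

lemma mu01_It (t : ℝ≥0∞) : mu01 (It t) = min t 1 := by
  rw [mu01, Measure.restrict_apply (measurableSet_It t)]
  rcases le_or_gt t 1 with h | h
  · rw [min_eq_left h]
    obtain ⟨r, hr, rfl⟩ : ∃ r : ℝ, 0 ≤ r ∧ t = ENNReal.ofReal r :=
      ⟨t.toReal, ENNReal.toReal_nonneg, (ENNReal.ofReal_toReal (ne_top_of_le_ne_top (by simp) h)).symm⟩
    have hr1 : r ≤ 1 := by simpa using h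
    have : It (ENNReal.ofReal r) ∩ Set.Icc 0 1 = Set.Ico 0 r := by
      ext s
      simp only [It, Set.mem_inter_iff, Set.mem_ofPred_eq, Set.mem_Icc, Set.mem_Ico]
      constructor
      · rintro ⟨⟨h1, h2⟩, -⟩
        exact ⟨h1, (ENNReal.ofReal_lt_ofReal_iff_of_nonneg h1).1 h2⟩
      · rintro ⟨h1, h2⟩
        exact ⟨⟨h1, (ENNReal.ofReal_lt_ofReal_iff_of_nonneg h1).2 h2⟩, h1, by linarith⟩
    rw [this]; simp
  · rw [min_eq_right h.le]
    have : It t ∩ Set.Icc 0 1 = Set.Icc 0 1 := by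
      ext s
      simp only [It, Set.mem_inter_iff, Set.mem_ofPred_eq, Set.mem_Icc, and_iff_right_iff_imp]
      rintro ⟨h1, h2⟩
      refine ⟨h1, lt_of_le_of_lt ?_ h⟩
      simpa using h2
    rw [this]; simp

lemma It_mono {a b : ℝ≥0∞} (h : a ≤ b) : It a ⊆ It b := fun _ hs => ⟨hs.1, hs.2.trans_le h⟩

lemma rho_ind_le (hRI : B.RI) {A : Set ℝ} (hA : MeasurableSet A) {c : ℝ≥0∞} (hc : c ≠ ⊤)
    {G : ℝ → ℝ≥0∞} (h : mu01 A ≤ mu01 {s | c ≤ G s}) :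
    rho B (A.indicator fun _ => c) ≤ rho B G := by
  classical
  apply rho_ri hRI (measurable_const.indicator hA).aemeasurable
  · intro s
    by_cases hs : s ∈ A <;> simp [hs, hc]
  · intro τ _
    rcases lt_or_ge τ c with h1 | h1
    · refine le_trans (measure_mono ?_) (h.trans (measure_mono ?_))
      · intro s (hs : τ < _)
        by_contra hn
        simp [hn] at hs
      · intro s (hs : c ≤ _)
        exact h1.trans_le hs
    · have : {s | τ < A.indicator (fun _ => c) s} = ∅ := by
        ext s
        by_cases hs : s ∈ A <;> simp [hs, h1]
      simp [this]

lemma rho_small (hrefl : Function.Surjective (NormedSpace.inclusionInDoubleDual ℝ X))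
    (ν : Set ℝ → ℝ → ℝ≥0∞) (hm : ∀ A, MeasurableSet A → AEMeasurable (ν A) mu01)
    (hmono : ∀ A A', A ⊆ A' → ∀ s, ν A s ≤ ν A' s) (hfin : rho B (ν Set.univ) ≠ ⊤)
    (hcont : ∀ A : ℕ → Set ℝ, (∀ n, MeasurableSet (A n)) → Antitone A → mu01 (⋂ n, A n) = 0 →
      ∀ᵐ s ∂mu01, Tendsto (fun n => ν (A n) s) atTop (𝓝 0)) (ε : ℝ≥0∞) (hε : 0 < ε) :
    ∃ δ : ℝ≥0∞, 0 < δ ∧ ∀ A, MeasurableSet A → mu01 A < δ → rho B (ν A) ≤ ε := by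
  by_contra hcon
  push Not at hcon
  choose A hA1 hA2 hA3 using fun n : ℕ => hcon (2⁻¹ ^ n) (ENNReal.pow_pos (by simp) n)
  let D : ℕ → Set ℝ := fun n => ⋃ k ≥ n, A k
  have hDm : ∀ n, MeasurableSet (D n) := fun n =>
    MeasurableSet.iUnion fun k => MeasurableSet.iUnion fun _ => hA1 k
  have hDanti : Antitone D := by
    intro m n hmn
    simp only [D]
    exact Set.iUnion_mono fun k => Set.iUnion_subset fun hk => Set.subset_iUnion_of_subset (hmn.trans hk) le_rfl
  have hD0 : mu01 (⋂ n, D n) = 0 := by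
    have h := measure_limsup_atTop_eq_zero (μ := mu01) (s := A) (by
      refine ne_top_of_le_ne_top ?_ (ENNReal.tsum_le_tsum fun n => (hA2 n).le)
      rw [ENNReal.tsum_geometric]
      simp)
    rw [Filter.limsup_eq_iInf_iSup_of_nat] at h
    simpa [D] using h
  have h := rho_OC (B := B) hrefl (fun n => ν (D n)) (fun n => hm _ (hDm n))
    (ne_top_of_le_ne_top hfin (rho_mono (hm _ (hDm 0)) (Filter.Eventually.of_forall
      fun s => hmono _ _ (Set.subset_univ _) s)))
    (Filter.Eventually.of_forall fun s m n hmn => hmono _ _ (hDanti hmn) s)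
    (hcont D hDm hDanti hD0)
  obtain ⟨n, hn⟩ := (h.eventually (gt_mem_nhds hε)).exists
  refine absurd hn (not_lt.2 ((hA3 n).le.trans (rho_mono (hm _ (hA1 n)) ?_)))
  exact Filter.Eventually.of_forall fun s => hmono _ _ (by
    simp only [D]
    exact Set.subset_iUnion_of_subset n (Set.subset_iUnion_of_subset le_rfl le_rfl)) s

lemma rho_AC (hrefl : Function.Surjective (NormedSpace.inclusionInDoubleDual ℝ X))
    (F : ℝ → ℝ≥0∞) (hF : AEMeasurable F mu01) (hfin : rho B F ≠ ⊤) (ε : ℝ≥0∞) (hε : 0 < ε) :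
    ∃ δ : ℝ≥0∞, 0 < δ ∧ ∀ A, MeasurableSet A → mu01 A < δ → rho B (A.indicator F) ≤ ε := by
  refine rho_small hrefl (fun A => A.indicator F) (fun A hA => hF.indicator hA)
    (fun A A' h s => Set.indicator_le_indicator_of_subset h (fun _ => zero_le) s)
    (by simpa using hfin) ?_ ε hε
  intro A hA hanti h0
  have : ∀ᵐ s ∂mu01, s ∉ ⋂ n, A n := measure_eq_zero_iff_ae_notMem.1 h0
  filter_upwards [this] with s hs
  simp only [Set.mem_iInter, not_forall] at hs
  obtain ⟨n, hn⟩ := hs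
  apply tendsto_const_nhds.congr'
  filter_upwards [eventually_ge_atTop n] with m hm
  rw [Set.indicator_of_notMem fun h => hn (hanti hm h)]

/-- the kernel operator on nonnegative functions -/
def TK (K : ℝ → ℝ → ℝ≥0∞) (u : ℝ → ℝ≥0∞) (s : ℝ) : ℝ≥0∞ := ∫⁻ y, K s y * u y ∂mu01

/-- the extended norm of the optimal domain -/
def QQ (B : BFS ℝ mu01 X) (K : ℝ → ℝ → ℝ≥0∞) (u : ℝ → ℝ≥0∞) : ℝ≥0∞ := rho B (TK K u)

variable {K : ℝ → ℝ → ℝ≥0∞}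

lemma TK_mono {u v : ℝ → ℝ≥0∞} (h : ∀ᵐ y ∂mu01, u y ≤ v y) (s : ℝ) : TK K u s ≤ TK K v s := by
  apply lintegral_mono_ae
  filter_upwards [h] with y hy
  gcongr

lemma TK_congr {u v : ℝ → ℝ≥0∞} (h : ∀ᵐ y ∂mu01, u y = v y) : TK K u = TK K v := by
  ext s
  exact le_antisymm (TK_mono (h.mono fun y hy => hy.le) s) (TK_mono (h.mono fun y hy => hy.ge) s)

lemma measurable_TK (hK : Measurable (Function.uncurry K)) {u : ℝ → ℝ≥0∞}
    (hu : AEMeasurable u mu01) : Measurable (TK K u) := by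
  rw [TK_congr (K := K) hu.ae_eq_mk]
  unfold TK
  apply Measurable.lintegral_prod_right' (f := fun p : ℝ × ℝ => K p.1 p.2 * hu.mk u p.2)
  exact Measurable.mul hK (hu.measurable_mk.comp measurable_snd)

lemma measK (hK : Measurable (Function.uncurry K)) (s : ℝ) : Measurable (K s) :=
  hK.comp measurable_prodMk_left

lemma TK_add (hK : Measurable (Function.uncurry K)) {u : ℝ → ℝ≥0∞} (hu : AEMeasurable u mu01)
    (v : ℝ → ℝ≥0∞) (s : ℝ) : TK K (fun y => u y + v y) s = TK K u s + TK K v s := by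
  unfold TK
  simp only [mul_add]
  exact lintegral_add_left' ((measK hK s).aemeasurable.mul hu) _

lemma TK_const_mul (hK : Measurable (Function.uncurry K)) {u : ℝ → ℝ≥0∞} (hu : AEMeasurable u mu01)
    (c : ℝ≥0∞) (s : ℝ) : TK K (fun y => c * u y) s = c * TK K u s := by
  unfold TK
  rw [← lintegral_const_mul'' (f := fun y => K s y * u y) _ ((measK hK s).aemeasurable.mul hu)]
  congr 1; ext y; ring

lemma TK_sum (hK : Measurable (Function.uncurry K)) {ι : Type*} (t : Finset ι)
    {u : ι → ℝ → ℝ≥0∞} (hu : ∀ i, AEMeasurable (u i) mu01) (s : ℝ) :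
    TK K (fun y => ∑ i ∈ t, u i y) s = ∑ i ∈ t, TK K (u i) s := by
  unfold TK
  simp only [Finset.mul_sum]
  exact lintegral_finsetSum' _ fun i _ => (measK hK s).aemeasurable.mul (hu i)

lemma TK_tsum (hK : Measurable (Function.uncurry K))
    {u : ℕ → ℝ → ℝ≥0∞} (hu : ∀ i, AEMeasurable (u i) mu01) (s : ℝ) :
    TK K (fun y => ∑' i, u i y) s = ∑' i, TK K (u i) s := by
  unfold TK
  simp only [← ENNReal.tsum_mul_left]
  exact lintegral_tsum fun i => (measK hK s).aemeasurable.mul (hu i)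

lemma QQ_mono (hK : Measurable (Function.uncurry K)) {u v : ℝ → ℝ≥0∞} (hu : AEMeasurable u mu01)
    (h : ∀ᵐ y ∂mu01, u y ≤ v y) : QQ B K u ≤ QQ B K v :=
  rho_mono (measurable_TK hK hu).aemeasurable (Filter.Eventually.of_forall (TK_mono h))

lemma QQ_add_le (hK : Measurable (Function.uncurry K)) {u : ℝ → ℝ≥0∞} (hu : AEMeasurable u mu01)
    (v : ℝ → ℝ≥0∞) : QQ B K (fun y => u y + v y) ≤ QQ B K u + QQ B K v := by
  unfold QQ
  rw [funext (TK_add hK hu v)]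
  exact rho_add_le _ _

lemma QQ_const_mul (hK : Measurable (Function.uncurry K)) {u : ℝ → ℝ≥0∞} (hu : AEMeasurable u mu01)
    {c : ℝ≥0∞} (hc : c ≠ ⊤) : QQ B K (fun y => c * u y) ≤ c * QQ B K u := by
  unfold QQ
  rw [funext (TK_const_mul hK hu c)]
  exact rho_const_mul hc _

lemma QQ_tsum_le (hrefl : Function.Surjective (NormedSpace.inclusionInDoubleDual ℝ X))
    (hK : Measurable (Function.uncurry K)) {u : ℕ → ℝ → ℝ≥0∞}
    (hu : ∀ i, AEMeasurable (u i) mu01) :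
    QQ B K (fun y => ∑' i, u i y) ≤ ∑' i, QQ B K (u i) := by
  unfold QQ
  rw [funext (TK_tsum hK hu)]
  exact rho_tsum_le hrefl _

lemma QQ_AC (hrefl : Function.Surjective (NormedSpace.inclusionInDoubleDual ℝ X))
    (hK : Measurable (Function.uncurry K)) {u : ℝ → ℝ≥0∞} (hu : AEMeasurable u mu01)
    (hfin : QQ B K u ≠ ⊤) (ε : ℝ≥0∞) (hε : 0 < ε) :
    ∃ δ : ℝ≥0∞, 0 < δ ∧ ∀ A, MeasurableSet A → mu01 A < δ → QQ B K (A.indicator u) ≤ ε := by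
  refine rho_small hrefl (fun A => TK K (A.indicator u))
    (fun A hA => (measurable_TK hK (hu.indicator hA)).aemeasurable)
    (fun A A' h s => TK_mono (Filter.Eventually.of_forall fun y =>
      Set.indicator_le_indicator_of_subset h (fun _ => zero_le) y) s)
    (by simpa [QQ] using hfin) ?_ ε hε
  intro A hA hanti h0
  filter_upwards [rho_ne_top_ae hfin] with s hs
  have : ∀ᵐ s ∂mu01, s ∉ ⋂ n, A n := measure_eq_zero_iff_ae_notMem.1 h0
  have h := tendsto_lintegral_of_dominated_convergence' (μ := mu01)
    (F := fun n y => K s y * (A n).indicator u y) (f := fun _ => 0) (fun y => K s y * u y)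
    (fun n => (measK hK s).aemeasurable.mul (hu.indicator (hA n)))
    (fun n => Filter.Eventually.of_forall fun y => by
      exact mul_le_mul' le_rfl (Set.indicator_le_self _ _ _)) hs (by
      filter_upwards [this] with y hy
      simp only [Set.mem_iInter, not_forall] at hy
      obtain ⟨n, hn⟩ := hy
      apply tendsto_const_nhds.congr'
      filter_upwards [eventually_ge_atTop n] with m hm
      rw [Set.indicator_of_notMem fun h => hn (hanti hm h), mul_zero])
  simpa [TK] using h

lemma small_level (hRI : B.RI) (h1 : rho B (fun _ => 1) ≠ ⊤) (C : ℝ≥0∞) (hC : C ≠ ⊤)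
    (δ : ℝ≥0∞) (hδ : 0 < δ) :
    ∃ L : ℕ, ∀ F : ℝ → ℝ≥0∞, rho B F ≤ C → mu01 {s | 2 ^ L < F s} < δ := by
  have hc : rho B ((It δ).indicator fun _ => 1) ≠ 0 := by
    intro h
    have h2 := rho_eq_zero h
    have h3 : mu01 (It δ) = 0 := by
      rw [measure_eq_zero_iff_ae_notMem]
      filter_upwards [h2] with s hs hn
      simp [hn] at hs
    rw [mu01_It] at h3
    simp [hδ.ne'] at h3
  obtain ⟨L, hL⟩ : ∃ L : ℕ, C / rho B ((It δ).indicator fun _ => 1) < 2 ^ L := by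
    have ht : Tendsto (fun L : ℕ => (2 : ℝ≥0∞) ^ L) atTop (𝓝 ⊤) :=
      ENNReal.tendsto_pow_atTop_nhds_top_iff.2 (by norm_num)
    exact (ht.eventually (lt_mem_nhds (ENNReal.div_lt_top hC hc))).exists
  refine ⟨L, fun F hF => ?_⟩
  by_contra hn
  push Not at hn
  have h2 : rho B ((It δ).indicator fun _ => (2 : ℝ≥0∞) ^ L) ≤ rho B F := by
    refine rho_ind_le hRI (measurableSet_It δ) (by simp) ?_
    rw [mu01_It]
    exact (min_le_left _ _).trans (hn.trans (measure_mono (by intro s hs; have hs2 : (2 : ℝ≥0∞) ^ L < F s := hs; exact hs2.le)))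
  have h3 : rho B ((It δ).indicator fun _ => 1) ≤ (2 ^ L)⁻¹ * C := by
    have e : ((It δ).indicator fun _ => (1 : ℝ≥0∞)) =
        fun s => (2 ^ L)⁻¹ * (It δ).indicator (fun _ => (2 : ℝ≥0∞) ^ L) s := by
      ext s
      by_cases hs : s ∈ It δ
      · simp only [hs, Set.indicator_of_mem]
        rw [ENNReal.inv_mul_cancel (by simp) (by simp)]
      · simp [hs]
    rw [e]
    exact (rho_const_mul (by simp) _).trans (by gcongr; exact h2.trans hF)
  rw [ENNReal.div_lt_iff (Or.inl hc) (Or.inr hC)] at hL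
  have h4 : 2 ^ L * rho B ((It δ).indicator fun _ => 1) ≤ 2 ^ L * ((2 ^ L)⁻¹ * C) := by gcongr
  rw [← mul_assoc, ENNReal.mul_inv_cancel (by simp) (by simp), one_mul] at h4
  exact absurd hL (not_lt.2 h4)

lemma rho_one_ne_top (hRI : B.RI) {x : X} (hx : x ≠ 0) : rho B (fun _ => 1) ≠ ⊤ := by
  obtain ⟨y, hy, -⟩ := B.ideal x (fun s => |B.J x s|)
    (continuous_abs.measurable.comp_aemeasurable (B.aemeasurable x)) (by simp)
  have hyr : Rep B (fun s => ENNReal.ofReal |B.J x s|) y := by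
    apply rep_ofReal
    · filter_upwards [hy] with s hs; rw [hs]; exact abs_nonneg _
    · filter_upwards [hy] with s hs; rw [hs]
  obtain ⟨n, hn⟩ : ∃ n : ℕ, 0 < mu01 {s | 1 ≤ ((n : ℝ≥0∞) + 1) * ENNReal.ofReal |B.J x s|} := by
    by_contra hcon
    push Not at hcon
    apply hx
    apply B.eq_zero
    have : ∀ᵐ s ∂mu01, ∀ n : ℕ, ¬ (1 ≤ ((n : ℝ≥0∞) + 1) * ENNReal.ofReal |B.J x s|) :=
      ae_all_iff.2 fun n => measure_eq_zero_iff_ae_notMem.1 (le_antisymm (hcon n) zero_le)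
    filter_upwards [this] with s hs
    by_contra h0
    obtain ⟨n, hn⟩ := exists_nat_gt (|B.J x s|⁻¹)
    apply hs n
    have hpos : 0 < |B.J x s| := abs_pos.2 h0
    have : ((n : ℝ≥0∞) + 1) = ENNReal.ofReal (n + 1) := by
      rw [ENNReal.ofReal_add (by positivity) (by norm_num)]; simp
    rw [this, ← ENNReal.ofReal_mul (by positivity), ← ENNReal.ofReal_one]
    apply ENNReal.ofReal_le_ofReal
    rw [inv_lt_iff_one_lt_mul₀ hpos] at hn
    nlinarith
  set G : ℝ → ℝ≥0∞ := fun s => ((n : ℝ≥0∞) + 1) * ENNReal.ofReal |B.J x s| with hG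
  have hGr : rho B G ≠ ⊤ := by
    refine ne_top_of_le_ne_top ?_ (rho_const_mul (by simp) _)
    rw [hyr.rho_eq]
    exact ENNReal.mul_ne_top (by simp) enorm_ne_top
  obtain ⟨N, hN⟩ := ENNReal.exists_inv_nat_lt hn.ne'
  have hN0 : N ≠ 0 := by
    rintro rfl
    simp at hN
  have hNpos : (0 : ℝ) < N := by positivity
  have hle : ∀ᵐ s ∂mu01, (1 : ℝ≥0∞) ≤ ∑ i ∈ Finset.range (N + 1),
      (Set.Ico ((i : ℝ) / N) ((i + 1 : ℝ) / N)).indicator (fun _ => (1 : ℝ≥0∞)) s := by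
    have : ∀ᵐ s ∂mu01, s ∈ Set.Icc (0 : ℝ) 1 := by
      unfold mu01; exact ae_restrict_mem measurableSet_Icc
    filter_upwards [this] with s hs
    have h0 : 0 ≤ s * N := mul_nonneg hs.1 hNpos.le
    have hmem : s ∈ Set.Ico ((⌊s * N⌋₊ : ℝ) / N) ((⌊s * N⌋₊ + 1 : ℝ) / N) := by
      constructor
      · rw [div_le_iff₀ hNpos]; exact Nat.floor_le h0
      · rw [lt_div_iff₀ hNpos]; exact Nat.lt_floor_add_one _
    have hr : ⌊s * N⌋₊ ∈ Finset.range (N + 1) := by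
      rw [Finset.mem_range, Nat.lt_succ_iff]
      apply Nat.floor_le_of_le
      nlinarith [hs.2]
    refine le_trans ?_ (Finset.single_le_sum (f := fun i : ℕ =>
      (Set.Ico ((i : ℝ) / N) ((i + 1 : ℝ) / N)).indicator (fun _ => (1 : ℝ≥0∞)) s) (by simp) hr)
    simp only [Set.indicator_of_mem hmem, le_refl]
  refine ne_top_of_le_ne_top ?_ ((rho_mono aemeasurable_const hle).trans (rho_sum_le _ _))
  rw [ENNReal.sum_ne_top]
  intro i _
  refine ne_top_of_le_ne_top hGr (rho_ind_le hRI measurableSet_Ico (by simp) ?_)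
  refine le_trans ?_ hN.le
  refine (Measure.restrict_apply_le _ _).trans ?_
  rw [Real.volume_Ico, ← sub_div, add_sub_cancel_left, one_div, ENNReal.ofReal_inv_of_pos hNpos]
  simp

end QLevel

section XTail

variable {X : Type*} [NormedAddCommGroup X] [NormedSpace ℝ X]
variable {B : BFS ℝ mu01 X}

lemma exists_pow_gt {τ : ℝ≥0∞} (hτ : τ ≠ ⊤) : ∃ i : ℕ, τ < 2 ^ i := by
  have ht : Tendsto (fun L : ℕ => (2 : ℝ≥0∞) ^ L) atTop (𝓝 ⊤) :=
    ENNReal.tendsto_pow_atTop_nhds_top_iff.2 (by norm_num)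
  exact (ht.eventually (lt_mem_nhds hτ.lt_top)).exists

lemma mu01_le_one (A : Set ℝ) : mu01 A ≤ 1 := by
  rw [← mu01_univ]; exact measure_mono (Set.subset_univ _)

lemma sum_two_pow (n : ℕ) : ∑ i ∈ Finset.range n, (2 : ℝ≥0∞) ^ (i + 1) + 2 = 2 ^ (n + 1) := by
  induction n with
  | zero => simp
  | succ n ih => rw [Finset.sum_range_succ, add_right_comm, ih]; ring

lemma pow2_mono {i j : ℕ} (h : i ≤ j) : (2 : ℝ≥0∞) ^ i ≤ 2 ^ j :=
  pow_le_pow_right₀ (by norm_num) h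

lemma rho_V (hRI : B.RI) (F : ℝ → ℝ≥0∞) (m : ℕ) :
    rho B (fun s => ∑ i ∈ Finset.range m,
      (It (mu01 {s | 2 ^ i < F s})).indicator (fun _ => (2 : ℝ≥0∞) ^ (i + 1)) s) ≤ 4 * rho B F := by
  refine le_trans ?_ (rho_const_mul (by simp) F)
  apply rho_ri hRI
  · apply Measurable.aemeasurable
    apply Finset.measurable_fun_sum
    intro i _
    exact measurable_const.indicator (measurableSet_It _)
  · intro s
    rw [ENNReal.sum_ne_top]
    intro i _
    refine ne_top_of_le_ne_top (b := (2 : ℝ≥0∞) ^ (i + 1)) (by simp) (Set.indicator_le_self _ _ _)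
  · intro τ hτ
    have hex : ∃ i : ℕ, τ < 2 ^ (i + 2) := by
      obtain ⟨i, hi⟩ := exists_pow_gt hτ
      exact ⟨i, hi.trans_le (pow2_mono (by omega))⟩
    classical
    set i0 := Nat.find hex
    have hi0 : τ < 2 ^ (i0 + 2) := Nat.find_spec hex
    have hmin : ∀ i < i0, 2 ^ (i + 2) ≤ τ := fun i hi => not_lt.1 (Nat.find_min hex hi)
    have hsub : {s | τ < ∑ i ∈ Finset.range m,
      (It (mu01 {s | 2 ^ i < F s})).indicator (fun _ => (2 : ℝ≥0∞) ^ (i + 1)) s} ⊆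
        It (mu01 {s | 2 ^ i0 < F s}) := by
      intro s hs
      by_contra hn
      have hs2 : τ < ∑ i ∈ Finset.range m,
        (It (mu01 {s | 2 ^ i < F s})).indicator (fun _ => (2 : ℝ≥0∞) ^ (i + 1)) s := hs
      apply absurd hs2
      rw [not_lt]
      have h1 : ∀ i, (It (mu01 {s | 2 ^ i < F s})).indicator (fun _ => (2 : ℝ≥0∞) ^ (i + 1)) s ≤
          if i < i0 then 2 ^ (i + 1) else 0 := by
        intro i
        split_ifs with h
        · exact Set.indicator_le_self _ _ _
        · rw [Set.indicator_of_notMem]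
          intro h2
          apply hn
          refine It_mono (measure_mono ?_) h2
          intro t ht
          have ht2 : 2 ^ i < F t := ht
          exact (pow2_mono (not_lt.1 h)).trans_lt ht2
      refine (Finset.sum_le_sum fun i _ => h1 i).trans ?_
      rw [← Finset.sum_filter]
      have h2 : ∑ i ∈ Finset.range i0, (2 : ℝ≥0∞) ^ (i + 1) ≤ τ := by
        rcases Nat.eq_zero_or_pos i0 with h | h
        · simp [h]
        · have := hmin (i0 - 1) (by omega)
          rw [show i0 - 1 + 2 = i0 + 1 by omega, ← sum_two_pow] at this
          exact le_self_add.trans this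
      refine le_trans (Finset.sum_le_sum_of_subset ?_) h2
      intro i hi
      simp at hi ⊢
      exact hi.2
    refine (measure_mono hsub).trans ?_
    rw [mu01_It]
    refine (min_le_left _ _).trans (measure_mono ?_)
    intro s hs
    have hs2 : 2 ^ i0 < F s := hs
    show τ < 4 * F s
    refine hi0.trans_le ?_
    rw [pow_add, mul_comm]
    norm_num
    gcongr

lemma rho_dom (hRI : B.RI) (F : ℝ → ℝ≥0∞) (hF : Measurable F) (E : ℕ → ℝ≥0∞) (j L : ℕ)
    (h : ∀ i ≤ L, mu01 {s | 2 ^ i < F s} ≤ E i) :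
    rho B ({s | 2 ^ j < F s ∧ F s ≤ 2 ^ (L + 1)}.indicator F) ≤
      rho B (fun s => ∑ i ∈ Finset.Ico j (L + 1),
        (It (E i)).indicator (fun _ => (2 : ℝ≥0∞) ^ (i + 1)) s) := by
  classical
  set A := {s | 2 ^ j < F s ∧ F s ≤ 2 ^ (L + 1)}
  have hA : MeasurableSet A := (measurableSet_lt measurable_const hF).inter
    (measurableSet_le hF measurable_const)
  apply rho_ri hRI (hF.indicator hA).aemeasurable
  · intro s
    by_cases hs : s ∈ A
    · rw [Set.indicator_of_mem hs]
      exact ne_top_of_le_ne_top (by simp) hs.2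
    · simp [hs]
  · intro τ hτ
    have hex : ∃ i : ℕ, j ≤ i ∧ τ < 2 ^ (i + 1) := by
      obtain ⟨i, hi⟩ := exists_pow_gt hτ
      exact ⟨i + j, by omega, hi.trans_le (pow2_mono (by omega))⟩
    set i0 := Nat.find hex
    have hi0 : j ≤ i0 ∧ τ < 2 ^ (i0 + 1) := Nat.find_spec hex
    have hmin : ∀ i < i0, j ≤ i → 2 ^ (i + 1) ≤ τ := fun i hi hj =>
      not_lt.1 fun hc => Nat.find_min hex hi ⟨hj, hc⟩
    have hs0 : ∀ s, τ < A.indicator F s → 2 ^ i0 < F s ∧ F s ≤ 2 ^ (L + 1) ∧ τ < F s := by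
      intro s hs
      by_cases hsA : s ∈ A
      · rw [Set.indicator_of_mem hsA] at hs
        refine ⟨?_, hsA.2, hs⟩
        rcases eq_or_lt_of_le hi0.1 with h | h
        · rw [← h]; exact hsA.1
        · have := hmin (i0 - 1) (by omega) (by omega)
          rw [show i0 - 1 + 1 = i0 by omega] at this
          exact this.trans_lt hs
      · simp [hsA] at hs
    by_cases hL : i0 ≤ L
    · have h1 : {s | τ < A.indicator F s} ⊆ {s | 2 ^ i0 < F s} := by
        intro s hs
        exact (hs0 s hs).1
      have h2 : mu01 {s | τ < A.indicator F s} ≤ mu01 (It (E i0)) := by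
        rw [mu01_It]
        exact le_min ((measure_mono h1).trans (h i0 hL)) (mu01_le_one _)
      refine h2.trans (measure_mono ?_)
      intro s hs
      refine lt_of_lt_of_le hi0.2 (le_trans ?_ (Finset.single_le_sum (f := fun i =>
        (It (E i)).indicator (fun _ => (2 : ℝ≥0∞) ^ (i + 1)) s) (by simp)
        (Finset.mem_Ico.2 ⟨hi0.1, Nat.lt_succ_of_le hL⟩)))
      simp only [Set.indicator_of_mem hs, le_refl]
    · have : {s | τ < A.indicator F s} = ∅ := by
        ext s
        simp only [Set.mem_empty_iff_false, iff_false]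
        intro hs
        have h3 := hs0 s hs
        exact absurd (h3.1.trans_le h3.2.1) (not_lt.2 (pow2_mono (by omega)))
      simp [this]

lemma xtail (hrefl : Function.Surjective (NormedSpace.inclusionInDoubleDual ℝ X)) (hRI : B.RI)
    (h1 : rho B (fun _ => 1) ≠ ⊤) (F : ℕ → ℝ → ℝ≥0∞) (hF : ∀ n, Measurable (F n))
    (C : ℝ≥0∞) (hC : C ≠ ⊤) (hb : ∀ n, rho B (F n) ≤ C) (D : ℕ → ℝ≥0∞)
    (hD : ∀ i : ℕ, Tendsto (fun n => mu01 {s | 2 ^ i < F n s}) atTop (𝓝 (D i))) :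
    ∃ e : ℕ → ℝ≥0∞, (∀ i, 0 < e i) ∧ ∀ ε : ℝ≥0∞, 0 < ε → ∃ j0 : ℕ, ∀ n L,
      (∀ i ≤ L, mu01 {s | 2 ^ i < F n s} ≤ D i + e i) →
      rho B ({s | 2 ^ j0 < F n s ∧ F n s ≤ 2 ^ (L + 1)}.indicator (F n)) ≤ ε := by
  choose δ hδ0 hδ using fun i : ℕ => rho_AC hrefl (B := B) (fun _ => 1) aemeasurable_const h1
    ((4⁻¹ : ℝ≥0∞) ^ (i + 1)) (ENNReal.pow_pos (by simp) _)
  have hD1 : ∀ i, D i ≤ 1 := fun i => le_of_tendsto' (hD i) fun n => mu01_le_one _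
  let e : ℕ → ℝ≥0∞ := fun i => min (δ i) 1 / 4
  have he : ∀ i, 0 < e i := fun i =>
    ENNReal.div_pos (ne_of_gt (lt_min (hδ0 i) one_pos)) (by simp)
  have het : ∀ i, e i ≠ ⊤ := fun i =>
    ENNReal.div_ne_top (ne_top_of_le_ne_top (by simp) (min_le_right _ _)) (by simp)
  have he2 : ∀ i, e i + e i < δ i := by
    intro i
    have h4 : e i + e i + (e i + e i) = min (δ i) 1 := by
      have : e i + e i + (e i + e i) = 4 * e i := by ring
      rw [this]
      exact ENNReal.mul_div_cancel (by simp) (by simp)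
    refine lt_of_lt_of_le ?_ (h4.le.trans (min_le_left _ _))
    exact ENNReal.lt_add_right (by simp [het]) (by simp [(he i).ne'])
  refine ⟨e, he, fun ε hε => ?_⟩
  set b : ℕ → ℝ → ℝ≥0∞ := fun i => (It (D i + e i)).indicator (fun _ => (2 : ℝ≥0∞) ^ (i + 1)) with hbdef
  have hsum : ∀ m, rho B (fun s => ∑ i ∈ Finset.range m, b i s) ≤
      4 * C + ∑' i : ℕ, (2⁻¹ : ℝ≥0∞) ^ (i + 1) := by
    intro m
    have hev : ∀ i, ∀ᶠ n in atTop, D i ≤ mu01 {s | 2 ^ i < F n s} + e i := by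
      intro i
      by_cases h0 : D i = 0
      · exact Filter.Eventually.of_forall fun n => by simp [h0]
      have := (hD i).eventually (lt_mem_nhds (ENNReal.sub_lt_self (ne_top_of_le_ne_top (by simp) (hD1 i)) h0 (he i).ne'))
      filter_upwards [this] with n hn
      exact tsub_le_iff_right.1 hn.le
    obtain ⟨n, hn⟩ := ((Finset.range m).eventually_all.2 fun i _ => hev i).exists
    set G : ℕ → Set ℝ := fun i => It (D i + e i) \ It (mu01 {s | 2 ^ i < F n s}) with hG
    have hGm : ∀ i, MeasurableSet (G i) := fun i => (measurableSet_It _).diff (measurableSet_It _)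
    have hpt : ∀ s, ∑ i ∈ Finset.range m, b i s ≤ ∑ i ∈ Finset.range m,
        (It (mu01 {s | 2 ^ i < F n s})).indicator (fun _ => (2 : ℝ≥0∞) ^ (i + 1)) s +
        ∑ i ∈ Finset.range m, 2 ^ (i + 1) * (G i).indicator (fun _ => 1) s := by
      intro s
      rw [← Finset.sum_add_distrib]
      apply Finset.sum_le_sum
      intro i _
      simp only [hbdef, hG]
      by_cases ha : s ∈ It (D i + e i) <;> by_cases hb : s ∈ It (mu01 {s | 2 ^ i < F n s}) <;>
        simp [ha, hb]
    refine (rho_mono ?_ (Filter.Eventually.of_forall hpt)).trans ((rho_add_le _ _).trans ?_)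
    · apply Measurable.aemeasurable
      apply Finset.measurable_fun_sum
      intro i _
      exact measurable_const.indicator (measurableSet_It _)
    gcongr
    · exact (rho_V hRI (F n) m).trans (by gcongr; exact hb n)
    · refine (rho_sum_le _ _).trans (le_trans (Finset.sum_le_sum fun i hi => ?_)
        (ENNReal.sum_le_tsum (Finset.range m)))
      refine (rho_const_mul (by simp) _).trans ?_
      have hμ : mu01 (G i) < δ i := by
        refine lt_of_le_of_lt ?_ (he2 i)
        have h3 := hn i hi
        by_cases hle : It (mu01 {s | 2 ^ i < F n s}) ⊆ It (D i + e i)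
        · simp only [hG]
          rw [measure_diff hle (measurableSet_It _).nullMeasurableSet (measure_ne_top _ _), mu01_It, mu01_It,
            min_eq_left (mu01_le_one {s | 2 ^ i < F n s}), tsub_le_iff_right]
          refine (min_le_left _ _).trans ?_
          calc D i + e i ≤ (mu01 {s | 2 ^ i < F n s} + e i) + e i := by gcongr
            _ = _ := by ring
        · have : It (D i + e i) ⊆ It (mu01 {s | 2 ^ i < F n s}) := by
            apply It_mono
            by_contra hc
            exact hle (It_mono (not_le.1 hc).le)
          simp only [hG]
          rw [Set.diff_eq_empty.2 this]
          simp
      calc 2 ^ (i + 1) * rho B ((G i).indicator fun _ => 1)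
          ≤ 2 ^ (i + 1) * (4⁻¹) ^ (i + 1) := by gcongr; exact hδ i (G i) (hGm i) hμ
        _ = 2⁻¹ ^ (i + 1) := by
          rw [← mul_pow]
          congr 1
          rw [show (4 : ℝ≥0∞) = 2 * 2 by norm_num, ENNReal.mul_inv (by simp) (by simp), ← mul_assoc,
            ENNReal.mul_inv_cancel (by simp) (by simp), one_mul]
        _ ≤ _ := le_rfl
  obtain ⟨j0, hj0⟩ := rho_tail hrefl (B := B) b _ (by
    refine ENNReal.add_ne_top.2 ⟨ENNReal.mul_ne_top (by simp) hC, ?_⟩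
    rw [ENNReal.tsum_geometric_add_one]
    refine ENNReal.mul_ne_top (by simp) ?_
    rw [ENNReal.one_sub_inv_two]; simp)
    (fun i => (measurable_const.indicator (measurableSet_It _)).aemeasurable) hsum ε hε
  exact ⟨j0, fun n L h => (rho_dom hRI (F n) (hF n) (fun i => D i + e i) j0 L h).trans
    (hj0 j0 le_rfl (L + 1))⟩

end XTail

section Core1

variable {X : Type*} [NormedAddCommGroup X] [NormedSpace ℝ X]
variable {B : BFS ℝ mu01 X} {K : ℝ → ℝ → ℝ≥0∞}

/-- dyadic slab of a function -/
def sl (a b : ℕ) (u : ℝ → ℝ≥0∞) : ℝ → ℝ≥0∞ := {y | 2 ^ a < u y ∧ u y ≤ 2 ^ b}.indicator u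

lemma measurable_sl (a b : ℕ) {u : ℝ → ℝ≥0∞} (hu : Measurable u) : Measurable (sl a b u) :=
  hu.indicator ((measurableSet_lt measurable_const hu).inter (measurableSet_le hu measurable_const))

lemma sl_sum (j m : ℕ) (h : j ≤ m) (u : ℝ → ℝ≥0∞) (y : ℝ) :
    ∑ i ∈ Finset.Ico j m, sl i (i + 1) u y = sl j m u y := by
  classical
  induction m, h using Nat.le_induction with
  | base =>
    simp only [Finset.Ico_self, Finset.sum_empty, sl]
    rw [Set.indicator_of_notMem]
    rintro ⟨h1, h2⟩
    exact absurd h1 (not_lt.2 h2)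
  | succ m hm ih =>
    rw [Finset.sum_Ico_succ_top hm, ih]
    simp only [sl, Set.indicator_apply, Set.mem_ofPred_eq]
    have h1 := pow2_mono hm
    have h2 := pow2_mono (Nat.le_succ m)
    by_cases h3 : u y ≤ 2 ^ m
    · have h4 : ¬ 2 ^ m < u y := not_lt.2 h3
      have h5 : u y ≤ 2 ^ (m + 1) := h3.trans h2
      simp [h3, h4, h5]
    · have h4 : 2 ^ m < u y := not_le.1 h3
      have h5 : 2 ^ j < u y := h1.trans_lt h4
      simp [h3, h4, h5]

lemma sl_le (a b : ℕ) (u : ℝ → ℝ≥0∞) (y : ℝ) : sl a b u y ≤ u y := Set.indicator_le_self _ _ _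

lemma sl_le_pow (a b : ℕ) (u : ℝ → ℝ≥0∞) (y : ℝ) : sl a b u y ≤ 2 ^ b * 1 := by
  classical
  unfold sl
  rw [Set.indicator_apply, mul_one]
  split_ifs with h
  · exact h.2
  · simp

lemma tail_small (c : ℕ → ℝ≥0∞) (hc : ∑' i, c i ≠ ⊤) (η : ℝ≥0∞) (hη : 0 < η) :
    ∃ j0 : ℕ, ∀ j ≥ j0, ∀ m, ∑ i ∈ Finset.Ico j m, c i < η := by
  have h := (ENNReal.tendsto_sum_nat_add c hc).eventually (gt_mem_nhds hη)
  obtain ⟨j0, hj0⟩ := eventually_atTop.1 h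
  refine ⟨j0, fun j hj m => lt_of_le_of_lt ?_ (hj0 j hj)⟩
  rw [Finset.sum_Ico_eq_sum_range]
  simp only [add_comm j]
  exact ENNReal.sum_le_tsum (f := fun k => c (k + j)) _

lemma QQ_zero : QQ B K (fun _ => 0) = 0 := by
  have : TK K (fun _ => 0) = fun _ => 0 := by ext s; simp [TK]
  rw [QQ, this, rho_zero]

lemma core1 (hrefl : Function.Surjective (NormedSpace.inclusionInDoubleDual ℝ X)) (hRI : B.RI)
    (h1 : rho B (fun _ => 1) ≠ ⊤) (hK : Measurable (Function.uncurry K))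
    (hQ1 : QQ B K (fun _ => 1) ≠ ⊤) (u : ℕ → ℝ → ℝ≥0∞) (hu : ∀ n, Measurable (u n))
    (C : ℝ≥0∞) (hC : C ≠ ⊤) (hb : ∀ n, QQ B K (u n) ≤ C) :
    ∃ σ : ℕ → ℕ, StrictMono σ ∧ ∀ ε : ℝ≥0∞, 0 < ε → ∃ j : ℕ, ∀ k,
      QQ B K (sl j (k + 1) (u (σ k))) ≤ ε := by
  set F : ℕ → ℝ → ℝ≥0∞ := fun n => TK K (u n) with hFdef
  have hFm : ∀ n, Measurable (F n) := fun n => measurable_TK hK (hu n).aemeasurable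
  set p : ℕ → ℕ → ℝ → ℝ≥0∞ := fun n i => TK K (sl i (i + 1) (u n)) with hpdef
  have hpm : ∀ n i, Measurable (p n i) := fun n i =>
    measurable_TK hK (measurable_sl _ _ (hu n)).aemeasurable
  set a : ℕ → ℕ → ℝ≥0∞ := fun n i => ∫⁻ s, p n i s * (1 + F n s)⁻¹ ∂mu01 with hadef
  have hq : ∀ n j m, j ≤ m → ∀ s, ∑ i ∈ Finset.Ico j m, p n i s = TK K (sl j m (u n)) s := by
    intro n j m hjm s
    simp only [hpdef]
    rw [← TK_sum hK _ (fun i => (measurable_sl _ _ (hu n)).aemeasurable)]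
    congr 1
    ext y
    exact sl_sum j m hjm _ _
  have ha : ∀ n j m, j ≤ m → ∑ i ∈ Finset.Ico j m, a n i =
      ∫⁻ s, TK K (sl j m (u n)) s * (1 + F n s)⁻¹ ∂mu01 := by
    intro n j m hjm
    simp only [hadef]
    rw [← lintegral_finsetSum (f := fun i s => p n i s * (1 + F n s)⁻¹) _ (fun i _ => (hpm n i).mul ((hFm n).const_add 1).inv)]
    congr 1
    ext s
    rw [← hq n j m hjm s, Finset.sum_mul]
  have ha1 : ∀ n m, ∑ i ∈ Finset.range m, a n i ≤ 1 := by
    intro n m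
    rw [Finset.range_eq_Ico, ha n 0 m (Nat.zero_le _)]
    calc _ ≤ ∫⁻ s, 1 ∂mu01 := by
          apply lintegral_mono
          intro s
          have : TK K (sl 0 m (u n)) s ≤ 1 + F n s :=
            (TK_mono (Filter.Eventually.of_forall (sl_le _ _ _)) s).trans le_add_self
          show TK K (sl 0 m (u n)) s * (1 + F n s)⁻¹ ≤ 1
          rw [← div_eq_mul_inv]
          exact ENNReal.div_le_of_le_mul (by rwa [one_mul])
      _ = 1 := by simp [mu01_univ]
  let d : ℕ → ℕ → ℝ≥0∞ := fun n i => mu01 {s | 2 ^ i < F n s}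
  obtain ⟨⟨D, a'⟩, φ, hφ, hlim⟩ := CompactSpace.tendsto_subseq
    (fun n => ((d n, a n) : (ℕ → ℝ≥0∞) × (ℕ → ℝ≥0∞)))
  rw [Prod.tendsto_iff] at hlim
  have hdlim : ∀ i, Tendsto (fun n => mu01 {s | 2 ^ i < F (φ n) s}) atTop (𝓝 (D i)) :=
    fun i => (tendsto_pi_nhds.1 hlim.1) i
  have halim : ∀ i, Tendsto (fun n => a (φ n) i) atTop (𝓝 (a' i)) :=
    fun i => (tendsto_pi_nhds.1 hlim.2) i
  have ha'1 : ∑' i, a' i ≤ 1 := by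
    rw [ENNReal.tsum_eq_iSup_nat]
    refine iSup_le fun m => ?_
    exact le_of_tendsto' (tendsto_finsetSum _ fun i _ => halim i) fun n => ha1 (φ n) m
  obtain ⟨e, he, htail⟩ := xtail hrefl hRI h1 (fun n => F (φ n)) (fun n => hFm _) C hC
    (fun n => hb _) D hdlim
  have hT1 : Measurable (TK K fun _ => 1) := measurable_TK hK aemeasurable_const
  choose δ hδ0 hδ using fun k : ℕ => rho_AC hrefl (B := B) (TK K fun _ => 1) hT1.aemeasurable hQ1
    ((4⁻¹ : ℝ≥0∞) ^ (k + 1)) (ENNReal.pow_pos (by simp) _)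
  choose L hL using fun k => small_level hRI h1 C hC (δ k) (hδ0 k)
  have hD1 : ∀ i, D i ≤ 1 := fun i => le_of_tendsto' (hdlim i) fun n => mu01_le_one _
  have ha'f : ∀ i, a' i ≠ ⊤ := fun i => ne_top_of_le_ne_top (by simp) ((ENNReal.le_tsum i).trans ha'1)
  have hev : ∀ k, ∀ᶠ n in atTop, (∀ i ≤ L k, mu01 {s | 2 ^ i < F (φ n) s} ≤ D i + e i) ∧
      (∀ i ≤ k, a (φ n) i ≤ a' i + 2⁻¹ ^ i) := by
    intro k
    apply Filter.Eventually.and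
    · have := (Finset.range (L k + 1)).eventually_all.2 fun i _ => (hdlim i).eventually
        (gt_mem_nhds (ENNReal.lt_add_right (ne_top_of_le_ne_top (by simp) (hD1 i)) (he i).ne'))
      filter_upwards [this] with n hn i hi
      exact (hn i (by simp; omega)).le
    · have := (Finset.range (k + 1)).eventually_all.2 fun i _ => (halim i).eventually
        (gt_mem_nhds (ENNReal.lt_add_right (b := 2⁻¹ ^ i) (ha'f i) (by simp)))
      filter_upwards [this] with n hn i hi
      exact (hn i (by simp; omega)).le
  obtain ⟨ψ, hψ, hψP⟩ := extraction_forall_of_eventually hev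
  refine ⟨φ ∘ ψ, hφ.comp hψ, fun ε hε => ?_⟩
  -- parameters
  have hε4 : 0 < ε / 4 := ENNReal.div_pos hε.ne' (by simp)
  obtain ⟨M, hM⟩ := htail (ε / 4) hε4
  obtain ⟨ε', hε'0, hε'⟩ := ENNReal.exists_nnreal_pos_mul_lt h1 hε4.ne'
  have hε'p : (0 : ℝ≥0∞) < ε' := by exact_mod_cast hε'0
  obtain ⟨δ1, hδ10, hδ1⟩ := rho_AC hrefl (B := B) (fun _ => 1) aemeasurable_const h1
    (ε / 4 / 2 ^ M) (ENNReal.div_pos hε4.ne' (by simp))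
  set c : ℝ≥0∞ := ε' * (1 + 2 ^ M)⁻¹ with hcdef
  have hc0 : 0 < c := by
    refine pos_iff_ne_zero.2 (mul_ne_zero hε'p.ne' ?_)
    simp
  have hcsum : ∑' i : ℕ, (a' i + 2⁻¹ ^ i) ≠ ⊤ := by
    rw [ENNReal.tsum_add]
    refine ENNReal.add_ne_top.2 ⟨ne_top_of_le_ne_top (by simp) ha'1, ?_⟩
    rw [ENNReal.tsum_geometric, ENNReal.one_sub_inv_two]; simp
  obtain ⟨j1, hj1⟩ := tail_small _ hcsum (δ1 * c) (pos_iff_ne_zero.2 (mul_ne_zero hδ10.ne' hc0.ne'))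
  obtain ⟨k0, hk0⟩ : ∃ k0 : ℕ, ∀ k ≥ k0, (2⁻¹ : ℝ≥0∞) ^ k ≤ ε / 4 := by
    have := (ENNReal.tendsto_pow_atTop_nhds_zero_of_lt_one (r := 2⁻¹) (by simp)).eventually
      (gt_mem_nhds hε4)
    obtain ⟨k0, hk0⟩ := eventually_atTop.1 this
    exact ⟨k0, fun k hk => (hk0 k hk).le⟩
  refine ⟨max j1 k0, fun k => ?_⟩
  set j := max j1 k0
  set n := φ (ψ k) with hn
  show QQ B K (sl j (k + 1) (u n)) ≤ ε
  by_cases hkj : k + 1 ≤ j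
  · have : sl j (k + 1) (u n) = fun _ => 0 := by
      ext y
      unfold sl
      rw [Set.indicator_of_notMem]
      rintro ⟨h2, h3⟩
      exact absurd (h2.trans_le h3) (not_lt.2 (pow2_mono hkj))
    rw [this, QQ_zero]
    exact zero_le
  have hjk : j ≤ k + 1 := by omega
  have hkk0 : k0 ≤ k := by have := le_max_right j1 k0; omega
  set q := TK K (sl j (k + 1) (u n)) with hqdef
  have hqm : Measurable q := measurable_TK hK (measurable_sl _ _ (hu n)).aemeasurable
  have hqF : ∀ s, q s ≤ F n s := TK_mono (Filter.Eventually.of_forall (sl_le _ _ _))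
  have hq1 : ∀ s, q s ≤ 2 ^ (k + 1) * TK K (fun _ => 1) s := by
    intro s
    rw [← TK_const_mul hK aemeasurable_const]
    exact TK_mono (Filter.Eventually.of_forall (sl_le_pow _ _ _)) s
  set A1 := {s | 2 ^ (L k + 1) < F n s} with hA1
  set A2 := {s | 2 ^ M < F n s ∧ F n s ≤ 2 ^ (L k + 1)} with hA2
  set A4 := {s | F n s ≤ 2 ^ M ∧ (ε' : ℝ≥0∞) < q s} with hA4
  have mA1 : MeasurableSet A1 := measurableSet_lt measurable_const (hFm n)
  have mA4 : MeasurableSet A4 := (measurableSet_le (hFm n) measurable_const).inter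
    (measurableSet_lt measurable_const hqm)
  have hpt : ∀ s, q s ≤ (2 ^ (k + 1) * A1.indicator (TK K fun _ => 1) s + A2.indicator (F n) s) +
      (ε' * 1 + 2 ^ M * A4.indicator (fun _ => 1) s) := by
    intro s
    by_cases c1 : s ∈ A1
    · rw [Set.indicator_of_mem c1]
      exact (hq1 s).trans (le_self_add.trans le_self_add)
    have c1' : F n s ≤ 2 ^ (L k + 1) := not_lt.1 c1
    by_cases c2 : s ∈ A2
    · rw [Set.indicator_of_mem c2]
      exact (hqF s).trans (le_add_self.trans le_self_add)
    have c2' : F n s ≤ 2 ^ M := by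
      by_contra hc
      exact c2 ⟨not_le.1 hc, c1'⟩
    by_cases c4 : s ∈ A4
    · rw [Set.indicator_of_mem c4]
      refine ((hqF s).trans c2').trans ?_
      rw [mul_one, mul_one]
      exact le_add_self.trans le_add_self
    · have : q s ≤ ε' := by
        by_contra hc
        exact c4 ⟨c2', not_le.1 hc⟩
      refine this.trans ?_
      rw [mul_one]
      exact le_self_add.trans le_add_self
  have hμ4 : mu01 A4 < δ1 := by
    have h2 : c * mu01 {s | c ≤ q s * (1 + F n s)⁻¹} ≤ ∫⁻ s, q s * (1 + F n s)⁻¹ ∂mu01 :=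
      mul_meas_ge_le_lintegral (hqm.mul ((hFm n).const_add 1).inv) _
    rw [hqdef, ← ha n j (k + 1) hjk] at h2
    have h3 : ∑ i ∈ Finset.Ico j (k + 1), a n i < δ1 * c := by
      refine lt_of_le_of_lt (Finset.sum_le_sum fun i hi => ?_) (hj1 j (le_max_left _ _) (k + 1))
      exact (hψP k).2 i (by simp at hi; omega)
    have h4 : mu01 A4 * c ≤ c * mu01 {s | c ≤ TK K (sl j (k + 1) (u n)) s * (1 + F n s)⁻¹} := by
      rw [mul_comm]
      gcongr
      intro s hs
      show ε' * (1 + 2 ^ M)⁻¹ ≤ q s * (1 + F n s)⁻¹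
      have := hs.1
      have := hs.2.le
      gcongr
    exact lt_of_mul_lt_mul_right' (h4.trans_lt (h2.trans_lt h3))
  have e1 : rho B (fun s => 2 ^ (k + 1) * A1.indicator (TK K fun _ => 1) s) ≤ ε / 4 := by
    refine (rho_const_mul (by simp) _).trans ?_
    have hμ1 : mu01 A1 < δ k := by
      refine lt_of_le_of_lt (measure_mono ?_) (hL k (F n) (hb n))
      intro s hs
      exact (pow2_mono (Nat.le_succ _)).trans_lt hs
    calc 2 ^ (k + 1) * rho B (A1.indicator (TK K fun _ => 1))
        ≤ 2 ^ (k + 1) * (4⁻¹) ^ (k + 1) := by gcongr; exact hδ k A1 mA1 hμ1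
      _ = 2⁻¹ ^ (k + 1) := by
        rw [← mul_pow]
        congr 1
        rw [show (4 : ℝ≥0∞) = 2 * 2 by norm_num, ENNReal.mul_inv (by simp) (by simp), ← mul_assoc,
          ENNReal.mul_inv_cancel (by simp) (by simp), one_mul]
      _ ≤ ε / 4 := hk0 _ (by omega)
  have e2 : rho B (A2.indicator (F n)) ≤ ε / 4 := hM (ψ k) (L k) (hψP k).1
  have e3 : rho B (fun _ => (ε' : ℝ≥0∞) * 1) ≤ ε / 4 := (rho_const_mul (by simp) _).trans hε'.le
  have e4 : rho B (fun s => 2 ^ M * A4.indicator (fun _ => 1) s) ≤ ε / 4 := by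
    refine (rho_const_mul (by simp) _).trans ?_
    calc 2 ^ M * rho B (A4.indicator fun _ => 1) ≤ 2 ^ M * (ε / 4 / 2 ^ M) := by
          gcongr; exact hδ1 A4 mA4 hμ4
      _ = ε / 4 := ENNReal.mul_div_cancel (by simp) (by simp)
  calc QQ B K (sl j (k + 1) (u n)) ≤ _ := rho_mono hqm.aemeasurable (Filter.Eventually.of_forall hpt)
    _ ≤ _ := rho_add_le _ _
    _ ≤ _ := add_le_add (rho_add_le _ _) (rho_add_le _ _)
    _ ≤ (ε / 4 + ε / 4) + (ε / 4 + ε / 4) := by gcongr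
    _ = 4 * (ε / 4) := by ring
    _ = ε := ENNReal.mul_div_cancel (by simp) (by simp)

end Core1

section Core2

variable {X : Type*} [NormedAddCommGroup X] [NormedSpace ℝ X]
variable {B : BFS ℝ mu01 X} {K : ℝ → ℝ → ℝ≥0∞}

lemma single_UI (hrefl : Function.Surjective (NormedSpace.inclusionInDoubleDual ℝ X))
    (hK : Measurable (Function.uncurry K)) {u : ℝ → ℝ≥0∞} (hu : Measurable u)
    (hfin : QQ B K u ≠ ⊤) (huf : ∀ y, u y ≠ ⊤) (ε : ℝ≥0∞) (hε : 0 < ε) :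
    ∃ M : ℕ, ∀ m ≥ M, QQ B K ({y | 2 ^ m < u y}.indicator u) ≤ ε := by
  obtain ⟨δ, hδ, h⟩ := QQ_AC hrefl hK hu.aemeasurable hfin ε hε
  have hanti : Antitone fun m : ℕ => {y | 2 ^ m < u y} := by
    intro m n hmn y hy
    exact (pow2_mono hmn).trans_lt hy
  have hm : ∀ m : ℕ, MeasurableSet {y | 2 ^ m < u y} := fun m => measurableSet_lt measurable_const hu
  have ht := tendsto_measure_iInter_atTop (μ := mu01) (fun m => (hm m).nullMeasurableSet) hanti
    ⟨0, measure_ne_top _ _⟩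
  have : ⋂ m : ℕ, {y | 2 ^ m < u y} = ∅ := by
    ext y
    simp only [Set.mem_iInter, Set.mem_empty_iff_false, iff_false, not_forall]
    obtain ⟨i, hi⟩ := exists_pow_gt (huf y)
    exact ⟨i, fun h => absurd (lt_trans hi h) (lt_irrefl _)⟩
  rw [this, measure_empty] at ht
  obtain ⟨M, hM⟩ := eventually_atTop.1 (ht.eventually (gt_mem_nhds hδ))
  exact ⟨M, fun m hmM => h _ (hm m) (hM m hmM)⟩

lemma extract_tri (c : ℕ → ℕ → ℝ≥0∞) (hc : ∀ i, Tendsto (c i) atTop (𝓝 0)) :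
    ∃ τ : ℕ → ℕ, StrictMono τ ∧ ∀ i k, i < k → c (τ i) (τ k) ≤ 2⁻¹ ^ k := by
  have hstep : ∀ m : ℕ, ∃ n, m < n ∧ ∀ i ≤ m, c i n ≤ 2⁻¹ ^ (m + 1) := by
    intro m
    have h1 := (Finset.range (m + 1)).eventually_all.2 fun i _ => (hc i).eventually
      (gt_mem_nhds (show (0 : ℝ≥0∞) < (2⁻¹ : ℝ≥0∞) ^ (m + 1) from ENNReal.pow_pos (by simp) _))
    obtain ⟨n, hn, hn2⟩ := (h1.and (eventually_gt_atTop m)).exists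
    exact ⟨n, hn2, fun i hi => (hn i (by simp; omega)).le⟩
  choose nx hnx1 hnx2 using hstep
  let τ : ℕ → ℕ := fun k => Nat.rec 0 (fun _ m => nx m) k
  have hτ : ∀ k, τ (k + 1) = nx (τ k) := fun k => rfl
  have hmono : StrictMono τ := strictMono_nat_of_lt_succ fun k => by rw [hτ]; exact hnx1 _
  refine ⟨τ, hmono, fun i k hik => ?_⟩
  obtain ⟨k, rfl⟩ : ∃ k', k = k' + 1 := ⟨k - 1, by omega⟩
  rw [hτ]
  refine (hnx2 (τ k) (τ i) (hmono.monotone (by omega))).trans ?_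
  exact pow_le_pow_right_of_le_one' (by simp) (by have := hmono.id_le k; simp at this; omega)

lemma core (hrefl : Function.Surjective (NormedSpace.inclusionInDoubleDual ℝ X)) (hRI : B.RI)
    (h1 : rho B (fun _ => 1) ≠ ⊤) (hK : Measurable (Function.uncurry K))
    (hQ1 : QQ B K (fun _ => 1) ≠ ⊤) (u : ℕ → ℝ → ℝ≥0∞) (hu : ∀ n, Measurable (u n))
    (huf : ∀ n y, u n y ≠ ⊤)
    (C : ℝ≥0∞) (hC : C ≠ ⊤) (hb : ∀ n, QQ B K (u n) ≤ C) :
    ∃ σ : ℕ → ℕ, StrictMono σ ∧ ∃ E : ℕ → Set ℝ, (∀ n, MeasurableSet (E n)) ∧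
      (∀ i j, i ≠ j → Disjoint (E i) (E j)) ∧
      (∀ ε : ℝ≥0∞, 0 < ε → ∃ M : ℕ, ∀ n,
        QQ B K ({y | 2 ^ M < u (σ n) y ∧ y ∉ E n}.indicator (u (σ n))) ≤ ε) ∧
      (∀ ε : ℝ≥0∞, 0 < ε → ∃ m : ℕ, QQ B K ((⋃ k, E (m + k)).indicator fun _ => 1) ≤ ε) := by
  obtain ⟨σ, hσ, hslab⟩ := core1 hrefl hRI h1 hK hQ1 u hu C hC hb
  set v : ℕ → ℝ → ℝ≥0∞ := fun k => u (σ k) with hv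
  set E0 : ℕ → Set ℝ := fun k => {y | 2 ^ (k + 1) < v k y} with hE0
  have mE0 : ∀ k, MeasurableSet (E0 k) := fun k => measurableSet_lt measurable_const (hu _)
  have hvm : ∀ k, Measurable (v k) := fun k => hu _
  have hE0Q : ∀ k, QQ B K ((E0 k).indicator fun _ => 1) ≤ 2⁻¹ ^ k * C := by
    intro k
    have hle : ∀ y, (E0 k).indicator (fun _ => (1 : ℝ≥0∞)) y ≤ 2⁻¹ ^ k * v k y := by
      intro y
      by_cases hy : y ∈ E0 k
      · rw [Set.indicator_of_mem hy]
        have h2 : (2 : ℝ≥0∞) ^ k ≤ v k y := (pow2_mono (Nat.le_succ k)).trans (le_of_lt hy)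
        calc (1 : ℝ≥0∞) = 2⁻¹ ^ k * 2 ^ k := by
              rw [← mul_pow, ENNReal.inv_mul_cancel (by simp) (by simp), one_pow]
          _ ≤ _ := by gcongr
      · simp [hy]
    refine (QQ_mono hK (measurable_const.indicator (mE0 k)).aemeasurable
      (Filter.Eventually.of_forall hle)).trans ?_
    refine (QQ_const_mul hK (hvm k).aemeasurable (ENNReal.pow_ne_top (by simp))).trans ?_
    gcongr
    exact hb _
  have hpow0 : Tendsto (fun k : ℕ => (2⁻¹ : ℝ≥0∞) ^ k) atTop (𝓝 0) :=
    ENNReal.tendsto_pow_atTop_nhds_zero_of_lt_one (by simp)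
  have hE00 : Tendsto (fun k => QQ B K ((E0 k).indicator fun _ => 1)) atTop (𝓝 0) := by
    refine tendsto_of_tendsto_of_tendsto_of_le_of_le tendsto_const_nhds ?_ (fun _ => zero_le) hE0Q
    simpa using ENNReal.Tendsto.mul_const hpow0 (Or.inr hC)
  have hc : ∀ i, Tendsto (fun k => QQ B K ((E0 k).indicator (v i))) atTop (𝓝 0) := by
    intro i
    rw [ENNReal.tendsto_nhds_zero]
    intro ε hε
    have hε2 : 0 < ε / 2 := ENNReal.half_pos hε.ne'
    obtain ⟨M, hM⟩ := single_UI hrefl hK (hvm i) (ne_top_of_le_ne_top hC (hb _)) (huf _) (ε / 2) hε2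
    have ht : Tendsto (fun k => 2 ^ M * QQ B K ((E0 k).indicator fun _ => 1)) atTop (𝓝 0) := by
      simpa using ENNReal.Tendsto.const_mul hE00 (a := 2 ^ M) (Or.inr (by simp))
    filter_upwards [ht.eventually (gt_mem_nhds hε2)] with k hk
    have hle : ∀ y, (E0 k).indicator (v i) y ≤ 2 ^ M * (E0 k).indicator (fun _ => 1) y +
        {y | 2 ^ M < v i y}.indicator (v i) y := by
      intro y
      by_cases hy : y ∈ E0 k
      · by_cases hy2 : 2 ^ M < v i y
        · have : y ∈ {y | 2 ^ M < v i y} := hy2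
          rw [Set.indicator_of_mem hy, Set.indicator_of_mem this]
          exact le_add_self
        · rw [Set.indicator_of_mem hy, Set.indicator_of_mem hy, mul_one]
          exact (not_lt.1 hy2).trans le_self_add
      · simp [hy]
    calc QQ B K ((E0 k).indicator (v i)) ≤ _ := QQ_mono hK ((hvm i).indicator (mE0 k)).aemeasurable
          (Filter.Eventually.of_forall hle)
      _ ≤ _ := QQ_add_le hK ((measurable_const.indicator (mE0 k)).const_mul _).aemeasurable _
      _ ≤ ε / 2 + ε / 2 := add_le_add ((QQ_const_mul hK
          (measurable_const.indicator (mE0 k)).aemeasurable (by simp)).trans hk.le) (hM M le_rfl)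
      _ = ε := ENNReal.add_halves ε
  obtain ⟨τ, hτ, hτc⟩ := extract_tri _ hc
  have hτid : ∀ k, k ≤ τ k := hτ.id_le
  set G : ℕ → Set ℝ := fun k => E0 (τ k) with hG
  set E : ℕ → Set ℝ := fun k => G k \ ⋃ l, ⋃ (_ : k < l), G l with hE
  have mG : ∀ k, MeasurableSet (G k) := fun k => mE0 _
  have mE : ∀ k, MeasurableSet (E k) := fun k => (mG k).diff
    (MeasurableSet.iUnion fun l => MeasurableSet.iUnion fun _ => mG l)
  refine ⟨σ ∘ τ, hσ.comp hτ, E, mE, ?_, ?_, ?_⟩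
  · have key : ∀ i j, i < j → Disjoint (E i) (E j) := by
      intro i j hij
      rw [Set.disjoint_left]
      intro y hy hy2
      exact hy.2 (Set.mem_iUnion₂.2 ⟨j, hij, hy2.1⟩)
    intro i j hij
    rcases lt_or_gt_of_ne hij with h | h
    · exact key i j h
    · exact (key j i h).symm
  · intro ε hε
    have hε2 : 0 < ε / 2 := ENNReal.half_pos hε.ne'
    obtain ⟨j, hj⟩ := hslab (ε / 2) hε2
    obtain ⟨n0, hn0⟩ := tail_small (fun k => (2⁻¹ : ℝ≥0∞) ^ k) (by
      rw [ENNReal.tsum_geometric, ENNReal.one_sub_inv_two]; simp) (ε / 2) hε2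
    choose Ms hMs using fun n : ℕ => single_UI hrefl hK (hvm (τ n)) (ne_top_of_le_ne_top hC (hb _))
      (huf _) ε hε
    refine ⟨j + ∑ n ∈ Finset.range n0, Ms n, fun n => ?_⟩
    set M := j + ∑ n ∈ Finset.range n0, Ms n
    show QQ B K ({y | 2 ^ M < v (τ n) y ∧ y ∉ E n}.indicator (v (τ n))) ≤ ε
    have mS : MeasurableSet {y | 2 ^ M < v (τ n) y ∧ y ∉ E n} :=
      (measurableSet_lt measurable_const (hvm _)).inter (mE n).compl
    by_cases hn : n < n0
    · have hM : Ms n ≤ M := (Finset.single_le_sum (f := Ms) (fun _ _ => Nat.zero_le _)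
        (Finset.mem_range.2 hn)).trans (Nat.le_add_left _ _)
      refine (QQ_mono hK ((hvm _).indicator mS).aemeasurable (Filter.Eventually.of_forall ?_)).trans
        (hMs n M hM)
      intro y
      refine Set.indicator_le_indicator_of_subset ?_ (fun _ => zero_le) y
      intro y hy
      exact hy.1
    · have hle : ∀ y, {y | 2 ^ M < v (τ n) y ∧ y ∉ E n}.indicator (v (τ n)) y ≤
          sl j (τ n + 1) (v (τ n)) y + ∑' l, (G (n + 1 + l)).indicator (v (τ n)) y := by
        intro y
        by_cases hy : 2 ^ M < v (τ n) y ∧ y ∉ E n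
        · have hy' : y ∈ {y | 2 ^ M < v (τ n) y ∧ y ∉ E n} := hy
          rw [Set.indicator_of_mem hy']
          by_cases hyG : y ∈ G n
          · have : ∃ l, n < l ∧ y ∈ G l := by
              by_contra hcon
              apply hy.2
              refine ⟨hyG, fun h => hcon ?_⟩
              obtain ⟨l, hl, hl2⟩ := Set.mem_iUnion₂.1 h
              exact ⟨l, hl, hl2⟩
            obtain ⟨l, hl, hl2⟩ := this
            refine le_trans ?_ le_add_self
            refine le_trans ?_ (ENNReal.le_tsum (l - (n + 1)))
            rw [show n + 1 + (l - (n + 1)) = l by omega, Set.indicator_of_mem hl2]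
          · have h2 : v (τ n) y ≤ 2 ^ (τ n + 1) := not_lt.1 hyG
            have h3 : 2 ^ j < v (τ n) y := (pow2_mono (Nat.le_add_right _ _)).trans_lt hy.1
            have h4 : y ∈ {y | 2 ^ j < v (τ n) y ∧ v (τ n) y ≤ 2 ^ (τ n + 1)} := ⟨h3, h2⟩
            unfold sl
            rw [Set.indicator_of_mem h4]
            exact le_self_add
        · have hy' : y ∉ {y | 2 ^ M < v (τ n) y ∧ y ∉ E n} := hy
          rw [Set.indicator_of_notMem hy']
          exact zero_le
      calc _ ≤ _ := QQ_mono hK ((hvm _).indicator mS).aemeasurable (Filter.Eventually.of_forall hle)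
        _ ≤ _ := QQ_add_le hK (measurable_sl _ _ (hvm _)).aemeasurable _
        _ ≤ ε / 2 + ε / 2 := by
          refine add_le_add (hj (τ n)) ?_
          refine (QQ_tsum_le hrefl hK fun l => ((hvm _).indicator (mG _)).aemeasurable).trans ?_
          have h5 : ∀ l, QQ B K ((G (n + 1 + l)).indicator (v (τ n))) ≤ 2⁻¹ ^ (n + 1 + l) :=
            fun l => hτc n (n + 1 + l) (by omega)
          refine (ENNReal.tsum_le_tsum h5).trans ?_
          rw [ENNReal.tsum_eq_iSup_nat]
          refine iSup_le fun m => ?_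
          have h6 := hn0 (n + 1) (by omega) (n + 1 + m)
          rw [Finset.sum_Ico_eq_sum_range, Nat.add_sub_cancel_left] at h6
          exact h6.le
        _ = ε := ENNReal.add_halves ε
  · intro ε hε
    obtain ⟨m, hm⟩ := tail_small (fun k => (2⁻¹ : ℝ≥0∞) ^ k * C) (by
      rw [ENNReal.tsum_mul_right, ENNReal.tsum_geometric, ENNReal.one_sub_inv_two]
      exact ENNReal.mul_ne_top (by simp) hC) ε hε
    refine ⟨m, ?_⟩
    have hle : ∀ y, (⋃ k, E (m + k)).indicator (fun _ => (1 : ℝ≥0∞)) y ≤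
        ∑' k, (G (m + k)).indicator (fun _ => 1) y := by
      intro y
      by_cases hy : y ∈ ⋃ k, E (m + k)
      · rw [Set.indicator_of_mem hy]
        obtain ⟨k, hk⟩ := Set.mem_iUnion.1 hy
        refine le_trans ?_ (ENNReal.le_tsum k)
        rw [Set.indicator_of_mem hk.1]
      · simp [hy]
    calc _ ≤ _ := QQ_mono hK (measurable_const.indicator
          (MeasurableSet.iUnion fun k => mE _)).aemeasurable (Filter.Eventually.of_forall hle)
      _ ≤ _ := QQ_tsum_le hrefl hK fun l => (measurable_const.indicator (mG _)).aemeasurable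
      _ ≤ ∑' k, 2⁻¹ ^ (m + k) * C := by
        refine ENNReal.tsum_le_tsum fun k => (hE0Q _).trans ?_
        gcongr ?_ * C
        exact pow_le_pow_right_of_le_one' (by simp) (hτid _)
      _ ≤ ε := by
        rw [ENNReal.tsum_eq_iSup_nat]
        refine iSup_le fun l => ?_
        have h6 := hm m le_rfl (m + l)
        rw [Finset.sum_Ico_eq_sum_range, Nat.add_sub_cancel_left] at h6
        exact h6.le

end Core2

section Transl

variable {X : Type*} [NormedAddCommGroup X] [NormedSpace ℝ X]
variable {B : BFS ℝ mu01 X} {K : ℝ → ℝ → ℝ≥0∞}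

/-- absolute value as an extended nonnegative function -/
def ab (f : ℝ → ℝ) : ℝ → ℝ≥0∞ := fun y => ENNReal.ofReal |f y|

lemma ab_aem {f : ℝ → ℝ} (hf : AEMeasurable f mu01) : AEMeasurable (ab f) mu01 :=
  (continuous_abs.measurable.comp_aemeasurable hf).ennreal_ofReal

lemma ab_meas {f : ℝ → ℝ} (hf : Measurable f) : Measurable (ab f) :=
  (continuous_abs.measurable.comp hf).ennreal_ofReal

lemma TKabs_eq (f : ℝ → ℝ) : TKabs K f = TK K (ab f) := rfl

lemma QQ_congr {u v : ℝ → ℝ≥0∞} (h : ∀ᵐ y ∂mu01, u y = v y) : QQ B K u = QQ B K v := by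
  unfold QQ; rw [TK_congr h]

lemma memTK_iff {f : ℝ → ℝ} : memTK B K f ↔ AEMeasurable f mu01 ∧ QQ B K (ab f) ≠ ⊤ := by
  refine and_congr_right fun _ => ⟨?_, ?_⟩
  · rintro ⟨x, hx⟩
    have hx' : Rep B (TK K (ab f)) x := hx
    rw [QQ, hx'.rho_eq]
    exact enorm_ne_top
  · intro h
    exact exists_rep h

lemma nrmTK_eq {f : ℝ → ℝ} (h : QQ B K (ab f) ≠ ⊤) : nrmTK B K f = (QQ B K (ab f)).toReal := by
  obtain ⟨x, hx⟩ := exists_rep h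
  have hx' : QQ B K (ab f) = ‖x‖ₑ := hx.rho_eq
  rw [hx']
  have : {r : ℝ | ∃ x : X, (∀ᵐ s ∂mu01, TKabs K f s ≠ ⊤ ∧ (TKabs K f s).toReal = B.J x s) ∧
      r = ‖x‖} = {‖x‖} := by
    ext r
    constructor
    · rintro ⟨z, hz, rfl⟩
      have hz' : Rep B (TK K (ab f)) z := hz
      rw [hx.unique hz']
      rfl
    · rintro rfl
      exact ⟨x, hx, rfl⟩
  unfold nrmTK
  rw [this]
  simp

lemma nrmTK_le_iff {f : ℝ → ℝ} (h : QQ B K (ab f) ≠ ⊤) {c : ℝ} (hc : 0 ≤ c) :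
    nrmTK B K f ≤ c ↔ QQ B K (ab f) ≤ ENNReal.ofReal c := by
  rw [nrmTK_eq h, ENNReal.le_ofReal_iff_toReal_le h hc]

lemma nrmTK_nonneg (f : ℝ → ℝ) : 0 ≤ nrmTK B K f := by
  apply Real.sInf_nonneg
  rintro r ⟨x, -, rfl⟩
  exact norm_nonneg _

lemma split (hrefl : Function.Surjective (NormedSpace.inclusionInDoubleDual ℝ X)) (hRI : B.RI)
    (h1 : rho B (fun _ => 1) ≠ ⊤) (hK : Measurable (Function.uncurry K))
    (hQ1 : QQ B K (fun _ => 1) ≠ ⊤) (f : ℕ → ℝ → ℝ) (hf : ∀ n, AEMeasurable (f n) mu01)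
    (C : ℝ≥0∞) (hC : C ≠ ⊤) (hb : ∀ n, QQ B K (ab (f n)) ≤ C) :
    ∃ σ : ℕ → ℕ, StrictMono σ ∧ ∃ E : ℕ → Set ℝ, (∀ n, MeasurableSet (E n)) ∧
      (∀ i j, i ≠ j → Disjoint (E i) (E j)) ∧
      (∀ ε : ℝ≥0∞, 0 < ε → ∃ M : ℕ, ∀ n,
        QQ B K ({y | 2 ^ M < ab (f (σ n)) y ∧ y ∉ E n}.indicator (ab (f (σ n)))) ≤ ε) ∧
      (∀ ε : ℝ≥0∞, 0 < ε → ∃ m : ℕ, QQ B K ((⋃ k, E (m + k)).indicator fun _ => 1) ≤ ε) := by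
  have hae : ∀ n, ∀ᵐ y ∂mu01, ab ((hf n).mk (f n)) y = ab (f n) y := by
    intro n
    filter_upwards [(hf n).ae_eq_mk] with y hy
    simp only [ab, hy]
  obtain ⟨σ, hσ, E, hE, hd, hUI, hS⟩ := core hrefl hRI h1 hK hQ1 (fun n => ab ((hf n).mk (f n)))
    (fun n => ab_meas (hf n).measurable_mk) (fun n y => ENNReal.ofReal_ne_top) C hC (fun n => by
      rw [QQ_congr (hae n)]; exact hb n)
  refine ⟨σ, hσ, E, hE, hd, fun ε hε => ?_, hS⟩
  obtain ⟨M, hM⟩ := hUI ε hε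
  refine ⟨M, fun n => ?_⟩
  refine le_trans (le_of_eq (QQ_congr ?_)) (hM n)
  classical
  filter_upwards [hae (σ n)] with y hy
  simp only [Set.indicator_apply, Set.mem_ofPred_eq, hy]

lemma UI_AC (hrefl : Function.Surjective (NormedSpace.inclusionInDoubleDual ℝ X))
    (hK : Measurable (Function.uncurry K))
    (hQ1 : QQ B K (fun _ => 1) ≠ ⊤) (f : ℕ → ℝ → ℝ) (hf : ∀ n, AEMeasurable (f n) mu01)
    (E : ℕ → Set ℝ) (hE : ∀ n, MeasurableSet (E n)) {A : Set ℝ} (hA : MeasurableSet A)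
    (M : ℕ) (n : ℕ) :
    QQ B K (ab (A.indicator ((E n)ᶜ.indicator (f n)))) ≤
      2 ^ M * QQ B K (A.indicator fun _ => 1) +
        QQ B K ({y | 2 ^ M < ab (f n) y ∧ y ∉ E n}.indicator (ab (f n))) := by
  classical
  have hle : ∀ y, ab (A.indicator ((E n)ᶜ.indicator (f n))) y ≤
      2 ^ M * A.indicator (fun _ => 1) y +
        {y | 2 ^ M < ab (f n) y ∧ y ∉ E n}.indicator (ab (f n)) y := by
    intro y
    by_cases hy : y ∈ A <;> by_cases hy2 : y ∈ E n
    · simp [ab, hy, hy2]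
    · by_cases h3 : 2 ^ M < ab (f n) y
      · have : y ∈ {y | 2 ^ M < ab (f n) y ∧ y ∉ E n} := ⟨h3, hy2⟩
        rw [Set.indicator_of_mem this]
        refine le_trans ?_ le_add_self
        simp [ab, hy, hy2]
      · refine le_trans ?_ le_self_add
        rw [not_lt] at h3
        simpa [ab, hy, hy2] using h3
    · simp [ab, hy]
    · simp [ab, hy]
  have hm : AEMeasurable (ab (A.indicator ((E n)ᶜ.indicator (f n)))) mu01 :=
    ab_aem (((hf n).indicator (hE n).compl).indicator hA)
  calc _ ≤ _ := QQ_mono hK hm (Filter.Eventually.of_forall hle)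
    _ ≤ _ := QQ_add_le hK ((measurable_const.indicator hA).const_mul _).aemeasurable _
    _ ≤ _ := by
      gcongr
      exact QQ_const_mul hK (measurable_const.indicator hA).aemeasurable (by simp)

lemma ab_indicator_le (A : Set ℝ) (f : ℝ → ℝ) (y : ℝ) : ab (A.indicator f) y ≤ ab f y := by
  by_cases hy : y ∈ A <;> simp [ab, hy]

lemma mem_indicator (hK : Measurable (Function.uncurry K)) {f : ℝ → ℝ} (hf : memTK B K f) {A : Set ℝ}
    (hA : MeasurableSet A) : memTK B K (A.indicator f) := by
  rw [memTK_iff] at hf ⊢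
  exact ⟨hf.1.indicator hA, ne_top_of_le_ne_top hf.2 (QQ_mono hK (ab_aem (hf.1.indicator hA))
    (Filter.Eventually.of_forall (ab_indicator_le A f)))⟩

lemma hasSSP (hrefl : Function.Surjective (NormedSpace.inclusionInDoubleDual ℝ X)) (hRI : B.RI)
    (h1 : rho B (fun _ => 1) ≠ ⊤) (hK : Measurable (Function.uncurry K))
    (hQ1 : QQ B K (fun _ => 1) ≠ ⊤) : HasSSP mu01 (memTK B K) (nrmTK B K) := by
  rintro f hmem ⟨C, hC⟩
  have hC0 : 0 ≤ C := (nrmTK_nonneg _).trans (hC 0)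
  have hm : ∀ n, AEMeasurable (f n) mu01 := fun n => (memTK_iff.1 (hmem n)).1
  obtain ⟨σ, hσ, E, hE, hd, hUI, -⟩ := split hrefl hRI h1 hK hQ1 f hm
    (ENNReal.ofReal C) ENNReal.ofReal_ne_top
    (fun n => (nrmTK_le_iff (memTK_iff.1 (hmem n)).2 hC0).1 (hC n))
  refine ⟨σ, hσ, fun n => (E n)ᶜ.indicator (f (σ n)), fun n => (E n).indicator (f (σ n)),
    fun n => mem_indicator hK (hmem _) (hE n).compl, fun n => mem_indicator hK (hmem _) (hE n),
    fun n => (Set.indicator_compl_add_self _ _).symm, ?_, ?_, ?_⟩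
  · intro n
    filter_upwards with y
    by_cases hy : y ∈ E n <;> simp [hy]
  · intro ε hε
    have hε' : 0 < ENNReal.ofReal ε := ENNReal.ofReal_pos.2 hε
    have hε2 : 0 < ENNReal.ofReal ε / 2 := ENNReal.half_pos hε'.ne'
    obtain ⟨M, hM⟩ := hUI _ hε2
    obtain ⟨δ, hδ, hδA⟩ := QQ_AC hrefl hK aemeasurable_const hQ1 (ENNReal.ofReal ε / 2 / 2 ^ M)
      (ENNReal.div_pos hε2.ne' (by simp))
    obtain ⟨δ', hδ'0, hδ'⟩ : ∃ δ' : ℝ, 0 < δ' ∧ ENNReal.ofReal δ' ≤ δ := by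
      refine ⟨(min δ 1).toReal, ENNReal.toReal_pos (ne_of_gt (lt_min hδ one_pos))
        (ne_top_of_le_ne_top (by simp) (min_le_right _ _)), ?_⟩
      rw [ENNReal.ofReal_toReal (ne_top_of_le_ne_top (by simp) (min_le_right _ _))]
      exact min_le_left _ _
    refine ⟨δ', hδ'0, fun A hA hAδ g hg => ?_⟩
    obtain ⟨n, rfl⟩ := hg
    rw [nrmTK_le_iff (memTK_iff.1 (mem_indicator hK (mem_indicator hK (hmem _) (hE n).compl) hA)).2 hε.le]
    refine (UI_AC hrefl hK hQ1 (fun n => f (σ n)) (fun n => hm _) E hE hA M n).trans ?_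
    calc _ ≤ 2 ^ M * (ENNReal.ofReal ε / 2 / 2 ^ M) + ENNReal.ofReal ε / 2 := by
          gcongr
          · exact hδA A hA (hAδ.trans_le hδ')
          · exact hM n
      _ = ENNReal.ofReal ε := by
        rw [ENNReal.mul_div_cancel (by simp) (by simp), ENNReal.add_halves]
  · intro i j hij
    filter_upwards with y
    by_cases hy : y ∈ E i
    · have : y ∉ E j := Set.disjoint_left.1 (hd i j hij) hy
      simp [this]
    · simp [hy]

lemma trivial_case (hX : ∀ x : X, x = 0) :
    HasSSP mu01 (memTK B K) (nrmTK B K) ∧ HasWBS (memTK B K) (nrmTK B K) := by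
  have h0 : ∀ f, nrmTK B K f = 0 := by
    intro f
    unfold nrmTK
    by_cases he : {r : ℝ | ∃ x : X, (∀ᵐ s ∂mu01, TKabs K f s ≠ ⊤ ∧ (TKabs K f s).toReal = B.J x s) ∧
      r = ‖x‖}.Nonempty
    · apply le_antisymm
      · obtain ⟨r, x, hx, rfl⟩ := he
        refine csInf_le ⟨0, ?_⟩ ⟨x, hx, ?_⟩
        · rintro r ⟨x, -, rfl⟩; exact norm_nonneg _
        · rw [hX x]; simp
      · apply Real.sInf_nonneg
        rintro r ⟨x, -, rfl⟩; exact norm_nonneg _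
    · rw [Set.not_nonempty_iff_eq_empty.1 he, Real.sInf_empty]
  constructor
  · intro f hf _
    refine ⟨id, strictMono_id, f, fun _ => 0, hf, ?_, fun n => by simp, fun n => by filter_upwards with y; simp, ?_,
      fun i j _ => by filter_upwards with y; simp⟩
    · intro n
      refine memTK_iff.2 ⟨aemeasurable_const, ?_⟩
      have : ab (0 : ℝ → ℝ) = fun _ => 0 := by ext; simp [ab]
      rw [this, QQ_zero]; simp
    · intro ε hε
      exact ⟨1, one_pos, fun A _ _ g _ => by rw [h0]; exact hε.le⟩
  · intro f _ _
    exact ⟨id, strictMono_id, by simp [h0]⟩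

lemma QQ_one_of (h : memTK B K ((Set.Icc (0 : ℝ) 1).indicator fun _ => 1)) :
    QQ B K (fun _ => 1) ≠ ⊤ := by
  rw [memTK_iff] at h
  rw [← QQ_congr (u := ab ((Set.Icc (0 : ℝ) 1).indicator fun _ => 1))]
  · exact h.2
  · have : ∀ᵐ s ∂mu01, s ∈ Set.Icc (0 : ℝ) 1 := by
      unfold mu01; exact ae_restrict_mem measurableSet_Icc
    filter_upwards [this] with s hs
    simp only [ab, Set.indicator_of_mem hs]
    simp

end Transl

section YSpace

variable {X : Type*} [NormedAddCommGroup X] [NormedSpace ℝ X]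
variable {B : BFS ℝ mu01 X} {K : ℝ → ℝ → ℝ≥0∞}

lemma ab_add_le (f g : ℝ → ℝ) (y : ℝ) : ab (f + g) y ≤ ab f y + ab g y := by
  simp only [ab, Pi.add_apply]
  rw [← ENNReal.ofReal_add (abs_nonneg _) (abs_nonneg _)]
  exact ENNReal.ofReal_le_ofReal (abs_add_le _ _)

lemma ab_smul (c : ℝ) (f : ℝ → ℝ) : ab (c • f) = fun y => ENNReal.ofReal |c| * ab f y := by
  ext y
  simp only [ab, Pi.smul_apply, smul_eq_mul, abs_mul]
  rw [ENNReal.ofReal_mul (abs_nonneg _)]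

lemma QQ_ab_add (hK : Measurable (Function.uncurry K)) {f g : ℝ → ℝ} (hf : AEMeasurable f mu01)
    (hg : AEMeasurable g mu01) : QQ B K (ab (f + g)) ≤ QQ B K (ab f) + QQ B K (ab g) :=
  (QQ_mono hK (ab_aem (hf.add hg)) (Filter.Eventually.of_forall (ab_add_le f g))).trans
    (QQ_add_le hK (ab_aem hf) _)

lemma QQ_ab_smul_le (hK : Measurable (Function.uncurry K)) (c : ℝ) {f : ℝ → ℝ}
    (hf : AEMeasurable f mu01) : QQ B K (ab (c • f)) ≤ ENNReal.ofReal |c| * QQ B K (ab f) := by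
  rw [ab_smul]
  exact QQ_const_mul hK (ab_aem hf) ENNReal.ofReal_ne_top

lemma QQ_ab_zero : QQ B K (ab 0) = 0 := by
  have : ab (0 : ℝ → ℝ) = fun _ => 0 := by ext; simp [ab]
  rw [this, QQ_zero]

lemma QQ_ab_smul (hK : Measurable (Function.uncurry K)) (c : ℝ) {f : ℝ → ℝ}
    (hf : AEMeasurable f mu01) : QQ B K (ab (c • f)) = ENNReal.ofReal |c| * QQ B K (ab f) := by
  apply le_antisymm (QQ_ab_smul_le hK c hf)
  by_cases hc : c = 0
  · simp [hc]
  · have h := QQ_ab_smul_le (B := B) hK c⁻¹ (hf.const_smul c)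
    rw [inv_smul_smul₀ hc] at h
    calc _ ≤ ENNReal.ofReal |c| * (ENNReal.ofReal |c⁻¹| * QQ B K (ab (c • f))) := by gcongr
      _ = QQ B K (ab (c • f)) := by
        rw [← mul_assoc, ← ENNReal.ofReal_mul (abs_nonneg _), ← abs_mul, mul_inv_cancel₀ hc]; simp

/-- the optimal domain as a submodule -/
def YT (B : BFS ℝ mu01 X) (K : ℝ → ℝ → ℝ≥0∞) (hK : Measurable (Function.uncurry K)) :
    Submodule ℝ (ℝ → ℝ) where
  carrier := {f | memTK B K f}
  add_mem' := by
    intro f g hf hg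
    have hf' := memTK_iff.1 hf
    have hg' := memTK_iff.1 hg
    exact memTK_iff.2 ⟨hf'.1.add hg'.1, ne_top_of_le_ne_top (ENNReal.add_ne_top.2 ⟨hf'.2, hg'.2⟩)
      (QQ_ab_add hK hf'.1 hg'.1)⟩
  zero_mem' := memTK_iff.2 ⟨aemeasurable_const, by rw [QQ_ab_zero]; simp⟩
  smul_mem' := by
    intro c f hf
    have hf' := memTK_iff.1 hf
    exact memTK_iff.2 ⟨hf'.1.const_smul c, by
      rw [QQ_ab_smul hK c hf'.1]; exact ENNReal.mul_ne_top (by simp) hf'.2⟩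

variable (B K) in
/-- the optimal domain as a seminormed space -/
def YY (hK : Measurable (Function.uncurry K)) : Type := {f : ℝ → ℝ // f ∈ YT B K hK}

variable {hK : Measurable (Function.uncurry K)}

instance : AddCommGroup (YY B K hK) := inferInstanceAs (AddCommGroup (YT B K hK))
instance : Module ℝ (YY B K hK) := inferInstanceAs (Module ℝ (YT B K hK))
instance : Norm (YY B K hK) := ⟨fun f => nrmTK B K f.1⟩

lemma YY.mem (f : YY B K hK) : memTK B K f.1 := f.2
lemma YY.aem (f : YY B K hK) : AEMeasurable f.1 mu01 := (memTK_iff.1 f.mem).1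
lemma YY.fin (f : YY B K hK) : QQ B K (ab f.1) ≠ ⊤ := (memTK_iff.1 f.mem).2
lemma YY.norm_def (f : YY B K hK) : ‖f‖ = nrmTK B K f.1 := rfl
lemma YY.norm_eq (f : YY B K hK) : ‖f‖ = (QQ B K (ab f.1)).toReal := nrmTK_eq f.fin
lemma YY.coe_add (f g : YY B K hK) : (f + g).1 = f.1 + g.1 := rfl
lemma YY.coe_smul (c : ℝ) (f : YY B K hK) : (c • f).1 = c • f.1 := rfl
lemma YY.coe_sub (f g : YY B K hK) : (f - g).1 = f.1 - g.1 := rfl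
lemma YY.coe_neg (f : YY B K hK) : (-f).1 = -f.1 := rfl

lemma YY.coe_sum {ι : Type*} (t : Finset ι) (f : ι → YY B K hK) :
    (∑ i ∈ t, f i).1 = ∑ i ∈ t, (f i).1 :=
  map_sum (Submodule.subtype (YT B K hK)) f t

lemma YY.core : SeminormedSpace.Core ℝ (YY B K hK) where
  norm_nonneg f := nrmTK_nonneg _
  norm_smul c f := by
    rw [YY.norm_eq, YY.norm_eq, YY.coe_smul, QQ_ab_smul hK c f.aem, ENNReal.toReal_mul,
      ENNReal.toReal_ofReal (abs_nonneg _), Real.norm_eq_abs]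
  norm_triangle f g := by
    rw [YY.norm_eq, YY.norm_eq, YY.norm_eq, ← ENNReal.toReal_add f.fin g.fin]
    exact ENNReal.toReal_mono (ENNReal.add_ne_top.2 ⟨f.fin, g.fin⟩) (QQ_ab_add hK f.aem g.aem)

instance : SeminormedAddCommGroup (YY B K hK) := SeminormedAddCommGroup.ofCore YY.core
instance : NormedSpace ℝ (YY B K hK) where
  norm_smul_le c f := (YY.core.norm_smul c f).le

lemma YY.enorm_eq (f : YY B K hK) : ‖f‖ₑ = QQ B K (ab f.1) := by
  rw [← ofReal_norm, YY.norm_eq, ENNReal.ofReal_toReal f.fin]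

lemma YY.norm_le_of {f : YY B K hK} {c : ℝ} (hc : 0 ≤ c) (h : QQ B K (ab f.1) ≤ ENNReal.ofReal c) :
    ‖f‖ ≤ c := ENNReal.toReal_le_of_le_ofReal hc h |>.trans_eq' (YY.norm_eq f).symm |>.trans_eq rfl

lemma YY.norm_mono {f g : YY B K hK} (h : ∀ᵐ y ∂mu01, |f.1 y| ≤ |g.1 y|) : ‖f‖ ≤ ‖g‖ := by
  rw [YY.norm_eq, YY.norm_eq]
  refine ENNReal.toReal_mono g.fin (QQ_mono hK (ab_aem f.aem) ?_)
  filter_upwards [h] with y hy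
  exact ENNReal.ofReal_le_ofReal hy

/-- dominated element -/
lemma mem_of_le (hK : Measurable (Function.uncurry K)) {f g : ℝ → ℝ} (hf : AEMeasurable f mu01)
    (hg : memTK B K g) (h : ∀ y, |f y| ≤ |g y|) : memTK B K f := by
  refine memTK_iff.2 ⟨hf, ne_top_of_le_ne_top (memTK_iff.1 hg).2 (QQ_mono hK (ab_aem hf) ?_)⟩
  filter_upwards with y
  exact ENNReal.ofReal_le_ofReal (h y)

/-- multiplication by a measurable function bounded by one -/
def mulc (s : ℝ → ℝ) (hs : Measurable s) (hs1 : ∀ y, |s y| ≤ 1) : YY B K hK →L[ℝ] YY B K hK :=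
  LinearMap.mkContinuous
    { toFun := fun f => ⟨fun y => s y * f.1 y, mem_of_le hK (hs.aemeasurable.mul f.aem) f.mem
        fun y => by
          rw [abs_mul]; exact mul_le_of_le_one_left (abs_nonneg _) (hs1 y)⟩
      map_add' := fun f g => Subtype.ext (by ext y; show s y * (f.1 y + g.1 y) = s y * f.1 y + s y * g.1 y; ring)
      map_smul' := fun c f => Subtype.ext (by ext y; show s y * (c * f.1 y) = c * (s y * f.1 y); ring) } 1
    (fun f => by
      rw [one_mul]
      apply YY.norm_mono
      filter_upwards with y
      show |s y * f.1 y| ≤ _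
      rw [abs_mul]; exact mul_le_of_le_one_left (abs_nonneg _) (hs1 y))

lemma mulc_apply (s : ℝ → ℝ) (hs : Measurable s) (hs1 : ∀ y, |s y| ≤ 1) (f : YY B K hK) :
    (mulc s hs hs1 f).1 = fun y => s y * f.1 y := rfl

open Classical in
/-- representative in `X` of `T_K u` -/
def Pu (B : BFS ℝ mu01 X) (K : ℝ → ℝ → ℝ≥0∞) (u : ℝ → ℝ≥0∞) : X :=
  if h : QQ B K u ≠ ⊤ then (exists_rep h).choose else 0

lemma Pu_rep {u : ℝ → ℝ≥0∞} (h : QQ B K u ≠ ⊤) : Rep B (TK K u) (Pu B K u) := by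
  unfold Pu
  rw [dif_pos h]
  exact (exists_rep h).choose_spec

lemma Pu_add (hK : Measurable (Function.uncurry K)) {u v : ℝ → ℝ≥0∞} (hu : AEMeasurable u mu01)
    (h1 : QQ B K u ≠ ⊤) (h2 : QQ B K v ≠ ⊤) :
    Pu B K (fun y => u y + v y) = Pu B K u + Pu B K v := by
  have h3 : QQ B K (fun y => u y + v y) ≠ ⊤ :=
    ne_top_of_le_ne_top (ENNReal.add_ne_top.2 ⟨h1, h2⟩) (QQ_add_le hK hu v)
  refine (Pu_rep h3).unique ?_
  have := rep_add (Pu_rep h1) (Pu_rep h2)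
  rwa [← funext (TK_add hK hu v)] at this

lemma Pu_smul (hK : Measurable (Function.uncurry K)) {u : ℝ → ℝ≥0∞} (hu : AEMeasurable u mu01)
    (h1 : QQ B K u ≠ ⊤) {c : ℝ} (hc : 0 ≤ c) :
    Pu B K (fun y => ENNReal.ofReal c * u y) = c • Pu B K u := by
  have h3 : QQ B K (fun y => ENNReal.ofReal c * u y) ≠ ⊤ :=
    ne_top_of_le_ne_top (ENNReal.mul_ne_top (by simp) h1) (QQ_const_mul hK hu (by simp))
  refine (Pu_rep h3).unique ?_
  filter_upwards [Pu_rep h1] with s hs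
  rw [TK_const_mul hK hu]
  refine ⟨ENNReal.mul_ne_top (by simp) hs.1, ?_⟩
  rw [ENNReal.toReal_mul, ENNReal.toReal_ofReal hc, hs.2]
  simp

/-- positive part -/
def pp (f : ℝ → ℝ) : ℝ → ℝ≥0∞ := fun y => ENNReal.ofReal (f y)

lemma pp_aem {f : ℝ → ℝ} (hf : AEMeasurable f mu01) : AEMeasurable (pp f) mu01 := hf.ennreal_ofReal

lemma pp_fin (hK : Measurable (Function.uncurry K)) {f : ℝ → ℝ} (hf : memTK B K f) :
    QQ B K (pp f) ≠ ⊤ := by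
  have h := memTK_iff.1 hf
  refine ne_top_of_le_ne_top h.2 (QQ_mono hK (pp_aem h.1) (Filter.Eventually.of_forall fun y => ?_))
  exact ENNReal.ofReal_le_ofReal (le_abs_self _)

lemma pp_add_eq (a b : ℝ) : ENNReal.ofReal (a + b) + (ENNReal.ofReal (-a) + ENNReal.ofReal (-b)) =
    ENNReal.ofReal (-(a + b)) + (ENNReal.ofReal a + ENNReal.ofReal b) := by
  have key : ∀ x : ℝ, ENNReal.ofReal x = ENNReal.ofReal (max x 0) := by
    intro x
    rcases le_total x 0 with h | h
    · rw [max_eq_right h, ENNReal.ofReal_of_nonpos h]; simp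
    · rw [max_eq_left h]
  rw [key (a + b), key (-a), key (-b), key (-(a + b)), key a, key b]
  simp only [← ENNReal.ofReal_add, le_max_iff, le_refl, or_true, add_nonneg]
  congr 1
  have key2 : ∀ x : ℝ, max x 0 = x + max (-x) 0 := by
    intro x
    rcases le_total x 0 with h | h
    · rw [max_eq_right h, max_eq_left (by linarith)]; ring
    · rw [max_eq_left h, max_eq_right (by linarith)]; ring
  rw [key2 (a + b), key2 a, key2 b]
  ring

lemma YY.neg_mem (f : YY B K hK) : memTK B K (-f.1) := (-f).mem

/-- the kernel operator on the optimal domain -/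
def Lop : YY B K hK →ₗ[ℝ] X where
  toFun f := Pu B K (pp f.1) - Pu B K (pp (-f.1))
  map_add' := by
    intro f g
    have e : (fun y => pp (f + g).1 y + (fun y => pp (-f.1) y + pp (-g.1) y) y) =
        (fun y => pp (-(f + g).1) y + (fun y => pp f.1 y + pp g.1 y) y) := by
      ext y
      exact pp_add_eq (f.1 y) (g.1 y)
    have fin1 : QQ B K (fun y => pp (-f.1) y + pp (-g.1) y) ≠ ⊤ := ne_top_of_le_ne_top
      (ENNReal.add_ne_top.2 ⟨pp_fin hK f.neg_mem, pp_fin hK g.neg_mem⟩)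
      (QQ_add_le hK (pp_aem f.aem.neg) _)
    have fin2 : QQ B K (fun y => pp f.1 y + pp g.1 y) ≠ ⊤ := ne_top_of_le_ne_top
      (ENNReal.add_ne_top.2 ⟨pp_fin hK f.mem, pp_fin hK g.mem⟩)
      (QQ_add_le hK (pp_aem f.aem) _)
    have h := congrArg (Pu B K) e
    rw [Pu_add hK (pp_aem (f + g).aem) (pp_fin hK (f + g).mem) fin1,
      Pu_add hK (pp_aem f.aem.neg) (pp_fin hK f.neg_mem) (pp_fin hK g.neg_mem),
      Pu_add hK (pp_aem (f + g).aem.neg) (pp_fin hK (f + g).neg_mem) fin2,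
      Pu_add hK (pp_aem f.aem) (pp_fin hK f.mem) (pp_fin hK g.mem)] at h
    rw [sub_add_sub_comm, sub_eq_sub_iff_add_eq_add, h]
    abel
  map_smul' := by
    intro c f
    have pos : ∀ (c : ℝ), 0 ≤ c → ∀ g : ℝ → ℝ, memTK B K g → Pu B K (pp (c • g)) = c • Pu B K (pp g) := by
      intro c hc g hg
      rw [← Pu_smul hK (pp_aem (memTK_iff.1 hg).1) (pp_fin hK hg) hc]
      congr 1
      ext y
      simp only [pp, Pi.smul_apply, smul_eq_mul]
      rw [ENNReal.ofReal_mul hc]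
    simp only [RingHom.id_apply, YY.coe_smul]
    rcases le_total 0 c with hc | hc
    · rw [← smul_neg, pos c hc _ f.mem, pos c hc _ f.neg_mem, smul_sub]
    · have e1 : c • f.1 = (-c) • (-f.1) := by simp
      have e2 : -(c • f.1) = (-c) • f.1 := by simp
      rw [e2, e1, pos (-c) (by linarith) _ f.mem, pos (-c) (by linarith) _ f.neg_mem, ← smul_sub,
        neg_smul, ← smul_neg, neg_sub]

lemma Lop_apply (f : YY B K hK) : Lop f = Pu B K (pp f.1) - Pu B K (pp (-f.1)) := rfl

lemma ab_eq_pp (f : ℝ → ℝ) : ab f = fun y => pp f y + pp (-f) y := by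
  ext y
  simp only [ab, pp, Pi.neg_apply]
  rcases le_total (f y) 0 with h | h
  · rw [abs_of_nonpos h, ENNReal.ofReal_of_nonpos h, zero_add]
  · rw [abs_of_nonneg h, ENNReal.ofReal_of_nonpos (by linarith : -f y ≤ 0), add_zero]

lemma Lop_norm_le (f : YY B K hK) : ‖Lop f‖ ≤ ‖f‖ := by
  have hr := Pu_rep f.fin
  have h1 : ‖Pu B K (ab f.1)‖ = ‖f‖ := by
    rw [YY.norm_eq, QQ, hr.rho_eq]; simp
  rw [← h1, ab_eq_pp, Pu_add hK (pp_aem f.aem) (pp_fin hK f.mem) (pp_fin hK f.neg_mem)]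
  apply norm_le_of_abs_le B
  filter_upwards [Pu_rep (pp_fin hK f.mem), Pu_rep (pp_fin hK f.neg_mem)] with s h2 h3
  rw [Lop_apply, map_sub, map_add, Pi.sub_apply, Pi.add_apply, ← h2.2, ← h3.2]
  have p1 : 0 ≤ (TK K (pp f.1) s).toReal := ENNReal.toReal_nonneg
  have p2 : 0 ≤ (TK K (pp (-f.1)) s).toReal := ENNReal.toReal_nonneg
  rw [abs_of_nonneg (add_nonneg p1 p2), abs_le]
  constructor <;> linarith

lemma Lop_norm_pos (f : YY B K hK) (h : ∀ y, 0 ≤ f.1 y) : ‖Lop f‖ = ‖f‖ := by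
  have hr := Pu_rep f.fin
  have h1 : ‖Pu B K (ab f.1)‖ = ‖f‖ := by
    rw [YY.norm_eq, QQ, hr.rho_eq]; simp
  rw [← h1, ab_eq_pp, Pu_add hK (pp_aem f.aem) (pp_fin hK f.mem) (pp_fin hK f.neg_mem), Lop_apply]
  have e : pp (-f.1) = fun _ => 0 := by
    ext y
    simp [pp, h y]
  have : Pu B K (pp (-f.1)) = 0 := by
    rw [e]
    have h0 : QQ B K (fun _ => 0) ≠ ⊤ := by rw [QQ_zero]; simp
    refine (Pu_rep h0).unique ?_
    have : TK K (fun _ => 0) = fun _ => 0 := by ext s; simp [TK]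
    rw [this]
    exact rep_zero
  rw [this, sub_zero, add_zero]

/-- the kernel operator as a continuous map -/
def Lc : YY B K hK →L[ℝ] X := LinearMap.mkContinuous Lop 1 (fun f => by
  rw [one_mul]; exact Lop_norm_le f)

lemma Lc_apply (f : YY B K hK) : Lc f = Lop f := rfl

lemma weak_bounded (f : ℕ → YY B K hK)
    (h : ∀ φ : StrongDual ℝ (YY B K hK), Tendsto (fun n => φ (f n)) atTop (𝓝 0)) :
    ∃ C : ℝ, ∀ n, ‖f n‖ ≤ C := by
  obtain ⟨C, hC⟩ := banach_steinhaus
    (g := fun n => NormedSpace.inclusionInDoubleDual ℝ (YY B K hK) (f n)) (by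
      intro φ
      obtain ⟨C, hC⟩ := (h φ).norm.bddAbove_range
      exact ⟨C, fun n => hC ⟨n, rfl⟩⟩)
  refine ⟨C, fun n => ?_⟩
  obtain ⟨φ, h1, h2⟩ := exists_dual_vector'' ℝ (f n)
  have h3 := (NormedSpace.inclusionInDoubleDual ℝ (YY B K hK) (f n)).le_opNorm φ
  rw [NormedSpace.dual_def, h2] at h3
  simp at h3
  have h4 : 0 ≤ ‖NormedSpace.inclusionInDoubleDual ℝ (YY B K hK) (f n)‖ := ContinuousLinearMap.opNorm_nonneg _
  refine h3.trans (le_trans ?_ (hC n))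
  exact mul_le_of_le_one_right h4 h1

lemma isBdd_of_dual (φ : StrongDual ℝ (YY B K hK)) :
    ∃ T : (ℝ → ℝ) → ℝ, IsBddLinFunctional (memTK B K) (nrmTK B K) T ∧
      ∀ f : YY B K hK, T f.1 = φ f := by
  classical
  have hT : ∀ f (hf : memTK B K f), (if h : memTK B K f then φ ⟨f, h⟩ else 0) = φ ⟨f, hf⟩ :=
    fun f hf => dif_pos hf
  refine ⟨fun f => if h : memTK B K f then φ ⟨f, h⟩ else 0, ⟨?_, ?_, ‖φ‖, ?_⟩, fun f => hT _ f.mem⟩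
  · intro f g hf hg
    have hfg : memTK B K (f + g) := (YT B K hK).add_mem hf hg
    simp only [hT _ hf, hT _ hg, hT _ hfg]
    exact map_add φ (⟨f, hf⟩ : YY B K hK) ⟨g, hg⟩
  · intro c f hf
    have hcf : memTK B K (c • f) := (YT B K hK).smul_mem c hf
    simp only [hT _ hf, hT _ hcf]
    exact map_smul φ c (⟨f, hf⟩ : YY B K hK)
  · intro f hf
    simp only [hT _ hf]
    exact φ.le_opNorm ⟨f, hf⟩

end YSpace

section Hilb

variable {H : Type*} [NormedAddCommGroup H] [InnerProductSpace ℝ H]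

lemma subseq_family {ι : Type*} [Countable ι] (a : ι → ℕ → ℝ) (D : ι → ℝ)
    (h : ∀ i n, |a i n| ≤ D i) :
    ∃ σ : ℕ → ℕ, StrictMono σ ∧ ∃ c : ι → ℝ, ∀ i, Tendsto (fun n => a i (σ n)) atTop (𝓝 (c i)) := by
  have hc : IsCompact (Set.pi Set.univ fun i => Set.Icc (-D i) (D i)) :=
    isCompact_univ_pi fun i => isCompact_Icc
  obtain ⟨c, -, σ, hσ, hl⟩ := hc.tendsto_subseq (x := fun n i => a i n)
    (fun n i _ => abs_le.1 (h i n))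
  exact ⟨σ, hσ, c, fun i => (tendsto_pi_nhds.1 hl) i⟩

lemma gram_extract (v : ℕ → ℕ → H) (C : ℕ → ℝ) (hv : ∀ t n, ‖v t n‖ ≤ C t) :
    ∃ σ : ℕ → ℕ, StrictMono σ ∧ ∀ t, ∃ (c : ℝ) (e : ℕ → ℝ), Tendsto e atTop (𝓝 0) ∧ (∀ i, 0 ≤ e i) ∧
      ∀ i j, i ≠ j → |inner ℝ (v t (σ i)) (v t (σ j)) - c| ≤ e i + e j := by
  have hb : ∀ t i j, |inner ℝ (v t i) (v t j)| ≤ C t * C t := fun t i j =>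
    (abs_real_inner_le_norm _ _).trans (mul_le_mul (hv _ _) (hv _ _) (norm_nonneg _)
      ((norm_nonneg _).trans (hv t i)))
  obtain ⟨σ1, hσ1, c1, hc1⟩ := subseq_family (ι := ℕ × ℕ)
    (fun p n => inner ℝ (v p.1 p.2) (v p.1 n)) (fun p => C p.1 * C p.1) (fun p n => hb _ _ _)
  have hc1b : ∀ t n, |c1 (t, n)| ≤ C t * C t := fun t n =>
    le_of_tendsto (hc1 (t, n)).abs (Filter.Eventually.of_forall fun k => hb _ _ _)
  obtain ⟨σ2, hσ2, c2, hc2⟩ := subseq_family (ι := ℕ)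
    (fun t n => c1 (t, σ1 n)) (fun t => C t * C t) (fun t n => hc1b _ _)
  set s := σ1 ∘ σ2 with hs
  have hsm : StrictMono s := hσ1.comp hσ2
  have hl1 : ∀ t i, Tendsto (fun j => inner ℝ (v t (s i)) (v t (s j))) atTop (𝓝 (c1 (t, s i))) :=
    fun t i => (hc1 (t, s i)).comp hσ2.tendsto_atTop
  have hl2 : ∀ t, Tendsto (fun i => c1 (t, s i)) atTop (𝓝 (c2 t)) := fun t => hc2 t
  obtain ⟨τ, hτ, hτc⟩ := extract_tri (fun i j => ENNReal.ofReal
    (∑ t ∈ Finset.range (i + 1), |inner ℝ (v t (s i)) (v t (s j)) - c1 (t, s i)|)) (by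
      intro i
      rw [← ENNReal.ofReal_zero]
      apply ENNReal.tendsto_ofReal
      rw [← Finset.sum_const_zero (s := Finset.range (i + 1)) (M := ℝ)]
      refine tendsto_finsetSum _ fun t _ => ?_
      have := ((hl1 t i).sub_const (c1 (t, s i))).abs
      simpa using this)
  have hτ2 : ∀ t i k, t ≤ i → i < k →
      |inner ℝ (v t (s (τ i))) (v t (s (τ k))) - c1 (t, s (τ i))| ≤ 2⁻¹ ^ k := by
    intro t i k hti hik
    have h := hτc i k hik
    have e : (2⁻¹ : ℝ≥0∞) ^ k = ENNReal.ofReal (2⁻¹ ^ k) := by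
      rw [ENNReal.ofReal_pow (by norm_num), ENNReal.ofReal_inv_of_pos (by norm_num)]; simp
    rw [e, ENNReal.ofReal_le_ofReal_iff (by positivity)] at h
    refine le_trans ?_ h
    exact Finset.single_le_sum (f := fun t => |inner ℝ (v t (s (τ i))) (v t (s (τ k))) - c1 (t, s (τ i))|)
      (fun _ _ => abs_nonneg _) (by have := hτ.id_le i; simp at this; simp; omega)
  refine ⟨s ∘ τ, hsm.comp hτ, fun t => ⟨c2 t, fun i => if i < t then C t * C t + |c2 t| else
    |c1 (t, s (τ i)) - c2 t| + 2⁻¹ ^ i, ?_, ?_, ?_⟩⟩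
  · have h1 : Tendsto (fun i => |c1 (t, s (τ i)) - c2 t| + (2⁻¹ : ℝ) ^ i) atTop (𝓝 0) := by
      have h2 := (((hl2 t).comp hτ.tendsto_atTop).sub_const (c2 t)).abs
      have h3 := h2.add (tendsto_pow_atTop_nhds_zero_of_lt_one (r := (2⁻¹ : ℝ)) (by norm_num) (by norm_num))
      simpa using h3
    refine h1.congr' ?_
    filter_upwards [eventually_ge_atTop t] with i hi
    rw [if_neg (by omega)]
  · intro i
    dsimp only
    split_ifs
    · have := mul_self_nonneg (C t); positivity
    · positivity
  · have nn : ∀ i, 0 ≤ (if i < t then C t * C t + |c2 t| else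
        |c1 (t, s (τ i)) - c2 t| + (2⁻¹ : ℝ) ^ i) := by
      intro i
      split_ifs
      · have := mul_self_nonneg (C t); positivity
      · positivity
    have key : ∀ i j, i < j → |inner ℝ (v t (s (τ i))) (v t (s (τ j))) - c2 t| ≤
        (if i < t then C t * C t + |c2 t| else |c1 (t, s (τ i)) - c2 t| + (2⁻¹ : ℝ) ^ i) +
        (if j < t then C t * C t + |c2 t| else |c1 (t, s (τ j)) - c2 t| + (2⁻¹ : ℝ) ^ j) := by
      intro i j hij
      by_cases hi : i < t
      · have n2 := nn j
        rw [if_pos hi]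
        have := abs_sub (inner ℝ (v t (s (τ i))) (v t (s (τ j)))) (c2 t)
        have := hb t (s (τ i)) (s (τ j))
        linarith
      · rw [if_neg hi, if_neg (by omega)]
        have h1 := hτ2 t i j (by omega) hij
        have h2 := abs_sub_le (inner ℝ (v t (s (τ i))) (v t (s (τ j)))) (c1 (t, s (τ i))) (c2 t)
        have h3 : (0 : ℝ) ≤ 2⁻¹ ^ i := by positivity
        have h4 := abs_nonneg (c1 (t, s (τ j)) - c2 t)
        linarith
    intro i j hij
    rcases lt_or_gt_of_ne hij with h | h
    · exact key i j h
    · have := key j i h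
      rw [real_inner_comm, add_comm] at this
      exact this

/-- Cesaro means -/
def avg {E : Type*} [AddCommGroup E] [Module ℝ E] (f : ℕ → E) (n : ℕ) : E :=
  (n : ℝ)⁻¹ • ∑ k ∈ Finset.range n, f k

lemma avg_cauchy (v : ℕ → H) (C : ℝ) (hv : ∀ n, ‖v n‖ ≤ C) (c : ℝ) (e : ℕ → ℝ)
    (he : Tendsto e atTop (𝓝 0)) (hnn : ∀ i, 0 ≤ e i)
    (h : ∀ i j, i ≠ j → |inner ℝ (v i) (v j) - c| ≤ e i + e j) :
    CauchySeq (avg v) := by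
  set D := C * C + |c| with hD
  have hD0 : 0 ≤ D := by have := mul_self_nonneg C; positivity
  have hall : ∀ i j, |inner ℝ (v i) (v j) - c| ≤ e i + e j + if i = j then D else 0 := by
    intro i j
    by_cases hij : i = j
    · rw [if_pos hij]
      have h1 := abs_sub (inner ℝ (v i) (v j)) c
      have h2 : |inner ℝ (v i) (v j)| ≤ C * C := (abs_real_inner_le_norm _ _).trans
        (mul_le_mul (hv _) (hv _) (norm_nonneg _) ((norm_nonneg _).trans (hv i)))
      have := hnn i
      have := hnn j
      linarith
    · rw [if_neg hij, add_zero]; exact h i j hij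
  have hce := he.cesaro
  set a : ℕ → ℝ := fun n => (n : ℝ)⁻¹ * ∑ i ∈ Finset.range n, e i with ha
  have key : ∀ N M : ℕ, 0 < N → 0 < M → |inner ℝ (avg v N) (avg v M) - c| ≤
      a N + a M + D * (N : ℝ)⁻¹ := by
    intro N M hN hM
    have hN' : (0 : ℝ) < N := by exact_mod_cast hN
    have hM' : (0 : ℝ) < M := by exact_mod_cast hM
    have e1 : inner ℝ (avg v N) (avg v M) - c = (N : ℝ)⁻¹ * ((M : ℝ)⁻¹ *
        ∑ i ∈ Finset.range N, ∑ j ∈ Finset.range M, (inner ℝ (v i) (v j) - c)) := by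
      unfold avg
      rw [real_inner_smul_left, real_inner_smul_right, sum_inner]
      simp only [inner_sum, Finset.sum_sub_distrib, Finset.sum_const, Finset.card_range, nsmul_eq_mul]
      field_simp
    rw [e1, abs_mul, abs_mul, abs_of_pos (inv_pos.2 hN'), abs_of_pos (inv_pos.2 hM')]
    have e2 : |∑ i ∈ Finset.range N, ∑ j ∈ Finset.range M, (inner ℝ (v i) (v j) - c)| ≤
        ∑ i ∈ Finset.range N, ∑ j ∈ Finset.range M, (e i + e j + if i = j then D else 0) :=
      (Finset.abs_sum_le_sum_abs _ _).trans (Finset.sum_le_sum fun i _ =>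
        (Finset.abs_sum_le_sum_abs _ _).trans (Finset.sum_le_sum fun j _ => hall i j))
    have e3 : ∑ i ∈ Finset.range N, ∑ j ∈ Finset.range M, (e i + e j + if i = j then D else 0) ≤
        M * ∑ i ∈ Finset.range N, e i + N * ∑ i ∈ Finset.range M, e i + M * D := by
      simp only [Finset.sum_add_distrib, Finset.sum_const, Finset.card_range, nsmul_eq_mul]
      rw [Finset.sum_comm (s := Finset.range N) (t := Finset.range M) (f := fun i j => if i = j then D else 0)]
      rw [← Finset.mul_sum]
      gcongr
      calc ∑ j ∈ Finset.range M, ∑ i ∈ Finset.range N, (if i = j then D else 0)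
          ≤ ∑ j ∈ Finset.range M, D := Finset.sum_le_sum fun j _ => by
            rw [Finset.sum_ite_eq']; split_ifs <;> linarith
        _ = M * D := by simp
    calc (N : ℝ)⁻¹ * ((M : ℝ)⁻¹ * |∑ i ∈ Finset.range N, ∑ j ∈ Finset.range M, (inner ℝ (v i) (v j) - c)|)
        ≤ (N : ℝ)⁻¹ * ((M : ℝ)⁻¹ * (M * ∑ i ∈ Finset.range N, e i + N * ∑ i ∈ Finset.range M, e i + M * D)) := by
          gcongr; exact e2.trans e3
      _ = _ := by simp only [ha]; field_simp
  have hb : Tendsto (fun n : ℕ => 4 * a n + 4 * D * (n : ℝ)⁻¹) atTop (𝓝 0) := by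
    have h1 := (hce.const_mul 4).add ((tendsto_inv_atTop_nhds_zero_nat (𝕜 := ℝ)).const_mul (4 * D))
    simpa using h1
  rw [Metric.cauchySeq_iff]
  intro ε hε
  obtain ⟨n0, hn0⟩ := ((hb.eventually (gt_mem_nhds (show (0 : ℝ) < ε ^ 2 / 2 by positivity))).and
    (eventually_gt_atTop 0)).exists_forall_of_atTop
  refine ⟨n0, fun N hN M hM => ?_⟩
  have hN1 := hn0 N hN
  have hM1 := hn0 M hM
  have k1 := key N M hN1.2 hM1.2
  have k2 := key N N hN1.2 hN1.2
  have k3 := key M M hM1.2 hM1.2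
  rw [abs_le] at k1 k2 k3
  rw [dist_eq_norm]
  refine lt_of_pow_lt_pow_left₀ 2 hε.le ?_
  rw [← real_inner_self_eq_norm_sq, inner_sub_left, inner_sub_right, inner_sub_right,
    real_inner_comm (avg v N) (avg v M)]
  have : 0 ≤ D * (M : ℝ)⁻¹ := by positivity
  have : 0 ≤ D * (N : ℝ)⁻¹ := by positivity
  nlinarith
end Hilb

section LtwoY

variable {X : Type*} [NormedAddCommGroup X] [NormedSpace ℝ X]
variable {B : BFS ℝ mu01 X} {K : ℝ → ℝ → ℝ≥0∞}

instance mu01_fin : IsFiniteMeasure mu01 := ⟨by rw [mu01_univ]; simp⟩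

lemma Ltwo_small (hrefl : Function.Surjective (NormedSpace.inclusionInDoubleDual ℝ X))
    (hK : Measurable (Function.uncurry K)) (hQ1 : QQ B K (fun _ => 1) ≠ ⊤)
    (R : ℝ) (ε : ℝ≥0∞) (hε : 0 < ε) :
    ∃ δ : ℝ, 0 < δ ∧ ∀ w : ℝ → ℝ, Measurable w → (∀ y, |w y| ≤ R) →
      eLpNorm w 2 mu01 ≤ ENNReal.ofReal δ → QQ B K (ab w) ≤ ε := by
  have hε2 : ε / 2 ≠ 0 := (ENNReal.half_pos hε.ne').ne'
  obtain ⟨κ, hκ0, hκ⟩ := ENNReal.exists_nnreal_pos_mul_lt hQ1 hε2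
  obtain ⟨ε', hε'0, hε'⟩ := ENNReal.exists_nnreal_pos_mul_lt (ENNReal.ofReal_ne_top (r := R)) hε2
  obtain ⟨δ0, hδ0, hA⟩ := QQ_AC hrefl hK (u := fun _ => 1) aemeasurable_const hQ1 (ε' : ℝ≥0∞) (by simpa using hε'0)
  obtain ⟨d, hd0, hd⟩ := ENNReal.lt_iff_exists_nnreal_btwn.1 hδ0
  have hd0' : 0 < d := by simpa using hd0
  obtain ⟨p, hp0, hp⟩ : ∃ p : ℝ, 0 < p ∧ p ^ 2 ≤ d := ⟨Real.sqrt d, Real.sqrt_pos.2 hd0', by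
    exact (Real.sq_sqrt (NNReal.coe_nonneg d)).le⟩
  have hκr : 0 < (κ : ℝ) := hκ0
  refine ⟨κ * p, by positivity, fun w hw hR hn => ?_⟩
  set A : Set ℝ := {y | (κ : ℝ≥0∞) ≤ ‖w y‖ₑ} with hAdef
  have mA : MeasurableSet A := measurableSet_le measurable_const hw.enorm
  have hmA : mu01 A < δ0 := by
    refine lt_of_le_of_lt ?_ hd
    have h1 := meas_ge_le_mul_pow_eLpNorm_enorm mu01 (p := 2) (by norm_num) (by norm_num)
      hw.aestronglyMeasurable (ε := (κ : ℝ≥0∞)) (by simpa using hκ0.ne') (by simp)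
    refine h1.trans ?_
    calc (κ : ℝ≥0∞)⁻¹ ^ (2 : ℝ≥0∞).toReal * eLpNorm w 2 mu01 ^ (2 : ℝ≥0∞).toReal
        ≤ (κ : ℝ≥0∞)⁻¹ ^ (2 : ℝ≥0∞).toReal * (ENNReal.ofReal (κ * p)) ^ (2 : ℝ≥0∞).toReal := by
          gcongr
      _ = ((κ : ℝ≥0∞)⁻¹ * ENNReal.ofReal (κ * p)) ^ 2 := by
          rw [← ENNReal.mul_rpow_of_nonneg _ _ (by simp)]; simp
      _ = ENNReal.ofReal p ^ 2 := by
          rw [ENNReal.ofReal_mul hκr.le, ENNReal.ofReal_coe_nnreal, ← mul_assoc,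
            ENNReal.inv_mul_cancel (by simpa using hκ0.ne') (by simp), one_mul]
      _ ≤ d := by
          rw [← ENNReal.ofReal_pow hp0.le, ← ENNReal.ofReal_coe_nnreal]
          exact ENNReal.ofReal_le_ofReal hp
  have hle : ∀ y, ab w y ≤ κ * 1 + ENNReal.ofReal R * A.indicator (fun _ => 1) y := by
    intro y
    have hab : ab w y = ‖w y‖ₑ := by
      simp only [ab]; rw [← ofReal_norm, Real.norm_eq_abs]
    by_cases hy : y ∈ A
    · rw [Set.indicator_of_mem hy, mul_one, mul_one]
      exact (ENNReal.ofReal_le_ofReal (hR y)).trans le_add_self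
    · rw [hab, mul_one]
      exact (lt_of_not_ge hy).le.trans le_self_add
  have mi : Measurable (A.indicator (fun _ => (1 : ℝ≥0∞))) := measurable_const.indicator mA
  calc QQ B K (ab w) ≤ QQ B K (fun y => κ * 1 + ENNReal.ofReal R * A.indicator (fun _ => 1) y) :=
        QQ_mono hK (ab_meas hw).aemeasurable (Filter.Eventually.of_forall hle)
    _ ≤ QQ B K (fun y => κ * 1) + QQ B K (fun y => ENNReal.ofReal R * A.indicator (fun _ => 1) y) :=
        QQ_add_le hK aemeasurable_const _
    _ ≤ κ * QQ B K (fun _ => 1) + ENNReal.ofReal R * QQ B K (A.indicator (fun _ => 1)) :=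
        add_le_add (QQ_const_mul hK aemeasurable_const (by simp))
          (QQ_const_mul hK mi.aemeasurable (by simp))
    _ ≤ ε / 2 + ENNReal.ofReal R * ε' := add_le_add hκ.le (by gcongr; exact hA A mA hmA)
    _ ≤ ε / 2 + ε / 2 := by gcongr; rw [mul_comm]; exact hε'.le
    _ = ε := ENNReal.add_halves ε

lemma avg_fun_apply (a : ℕ → ℝ → ℝ) (n : ℕ) (y : ℝ) :
    avg a n y = (n : ℝ)⁻¹ * ∑ k ∈ Finset.range n, a k y := by
  simp [avg]

lemma avg_meas {a : ℕ → ℝ → ℝ} (ha : ∀ n, Measurable (a n)) (n : ℕ) : Measurable (avg a n) := by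
  have : avg a n = fun y => (n : ℝ)⁻¹ * ∑ k ∈ Finset.range n, a k y := funext (avg_fun_apply a n)
  rw [this]
  exact (Finset.measurable_sum _ fun k _ => ha k).const_mul _

lemma avg_norm_le {E : Type*} [SeminormedAddCommGroup E] [NormedSpace ℝ E] (f : ℕ → E) {C : ℝ} (hC : 0 ≤ C)
    (h : ∀ n, ‖f n‖ ≤ C) (n : ℕ) : ‖avg f n‖ ≤ C := by
  unfold avg
  rw [norm_smul, norm_inv, Real.norm_natCast]
  rcases Nat.eq_zero_or_pos n with rfl | hn
  · simpa using hC
  · have hn' : (0 : ℝ) < n := by exact_mod_cast hn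
    rw [inv_mul_le_iff₀ hn']
    calc _ ≤ ∑ k ∈ Finset.range n, C := norm_sum_le_of_le _ fun k _ => h k
      _ = n * C := by simp

lemma avg_bdd {a : ℕ → ℝ → ℝ} {R : ℝ} (ha : ∀ n y, |a n y| ≤ R) (n : ℕ) (y : ℝ) : |avg a n y| ≤ R := by
  have h := avg_norm_le (fun k => a k y) ((abs_nonneg _).trans (ha 0 0)) (fun k => ha k y) n
  rw [avg_fun_apply]
  simpa [avg] using h

/-- the class in `L²` of a bounded function -/
def tl (a : ℝ → ℝ) (h : MemLp a 2 mu01) : Lp ℝ 2 mu01 := h.toLp a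

lemma memL {a : ℝ → ℝ} (hm : Measurable a) {R : ℝ} (h : ∀ y, |a y| ≤ R) : MemLp a 2 mu01 :=
  MemLp.of_bound hm.aestronglyMeasurable R (Filter.Eventually.of_forall h)

lemma norm_tl_le {a : ℝ → ℝ} (hm : Measurable a) {R : ℝ} (h : ∀ y, |a y| ≤ R) :
    ‖(memL hm h).toLp a‖ ≤ R := by
  have hR : 0 ≤ R := (abs_nonneg _).trans (h 0)
  rw [Lp.norm_toLp]
  have := eLpNorm_le_of_ae_bound (p := 2) (μ := mu01) (f := a) (C := R) (Filter.Eventually.of_forall h)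
  rw [mu01_univ] at this
  simp only [ENNReal.one_rpow, one_mul] at this
  exact ENNReal.toReal_le_of_le_ofReal hR this

lemma avg_toLp {a : ℕ → ℝ → ℝ} (hm : ∀ n, MemLp (a n) 2 mu01) (n : ℕ) :
    ⇑(avg (fun k => (hm k).toLp (a k)) n) =ᵐ[mu01] avg a n := by
  have h1 : ⇑(∑ k ∈ Finset.range n, (hm k).toLp (a k)) =ᵐ[mu01] ∑ k ∈ Finset.range n, a k := by
    induction n with
    | zero => simpa using Lp.coeFn_zero ℝ 2 mu01
    | succ n ih =>
      rw [Finset.sum_range_succ, Finset.sum_range_succ]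
      exact (Lp.coeFn_add _ _).trans (ih.add (hm n).coeFn_toLp)
  unfold avg
  filter_upwards [Lp.coeFn_smul (n : ℝ)⁻¹ (∑ k ∈ Finset.range n, (hm k).toLp (a k)), h1] with y h2 h3
  rw [h2, Pi.smul_apply, Pi.smul_apply, h3]

lemma avg_cauchy_Y (hrefl : Function.Surjective (NormedSpace.inclusionInDoubleDual ℝ X))
    (hK : Measurable (Function.uncurry K)) (hQ1 : QQ B K (fun _ => 1) ≠ ⊤)
    (a : ℕ → ℝ → ℝ) (hm : ∀ n, Measurable (a n)) (R : ℝ) (hR : ∀ n y, |a n y| ≤ R)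
    (hc : CauchySeq (avg fun n => (memL (hm n) (hR n)).toLp (a n))) (ε : ℝ≥0∞) (hε : 0 < ε) :
    ∃ N0, ∀ N M, N0 ≤ N → N0 ≤ M → QQ B K (ab (avg a N - avg a M)) ≤ ε := by
  obtain ⟨δ, hδ, h⟩ := Ltwo_small (B := B) hrefl hK hQ1 (R + R) ε hε
  obtain ⟨N0, hN0⟩ := Metric.cauchySeq_iff.1 hc δ hδ
  refine ⟨N0, fun N M hN hM => h _ ((avg_meas hm N).sub (avg_meas hm M)) (fun y => ?_) ?_⟩
  · exact (abs_sub _ _).trans (add_le_add (avg_bdd hR N y) (avg_bdd hR M y))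
  · have h1 := (hN0 N hN M hM).le
    rw [Lp.dist_def] at h1
    rw [eLpNorm_congr_ae ((avg_toLp _ N).sub (avg_toLp _ M))] at h1
    refine ENNReal.le_ofReal_iff_toReal_le ?_ hδ.le |>.2 h1
    exact (memL ((avg_meas hm N).sub (avg_meas hm M)) (R := R + R) (fun y =>
      (abs_sub _ _).trans (add_le_add (avg_bdd hR N y) (avg_bdd hR M y)))).2.ne

end LtwoY

section Wbs

lemma avg_add {E : Type*} [AddCommGroup E] [Module ℝ E] (f g : ℕ → E) (n : ℕ) :
    avg (fun k => f k + g k) n = avg f n + avg g n := by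
  simp only [avg, Finset.sum_add_distrib, smul_add]

lemma avg_map {E G : Type*} [AddCommGroup E] [Module ℝ E] [AddCommGroup G] [Module ℝ G]
    (φ : E →ₗ[ℝ] G) (f : ℕ → E) (n : ℕ) : φ (avg f n) = avg (fun k => φ (f k)) n := by
  simp only [avg, map_smul, map_sum]

lemma final_abs {Y : Type*} [SeminormedAddCommGroup Y] [NormedSpace ℝ Y] (F h : ℕ → Y)
    (a r : ℕ → ℕ → Y) (hF : ∀ t n, F n = a t n + (r t n + h n))
    (ha : ∀ t, ∀ ε : ℝ, 0 < ε → ∃ N0, ∀ N M, N0 ≤ N → N0 ≤ M → ‖avg (a t) N - avg (a t) M‖ ≤ ε)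
    (hr : ∀ ε : ℝ, 0 < ε → ∃ t, ∀ n, ‖r t n‖ ≤ ε)
    (hh : Tendsto (fun n => ‖avg h n‖) atTop (𝓝 0))
    (hw : ∀ φ : StrongDual ℝ Y, Tendsto (fun n => φ (F n)) atTop (𝓝 0)) :
    Tendsto (fun n => ‖avg F n‖) atTop (𝓝 0) := by
  have hca : ∀ ε : ℝ, 0 < ε → ∃ N0, ∀ N M, N0 ≤ N → N0 ≤ M → ‖avg F N - avg F M‖ ≤ 5 * ε := by
    intro ε hε
    obtain ⟨t, ht⟩ := hr ε hε
    obtain ⟨N1, hN1⟩ := ha t ε hε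
    obtain ⟨N2, hN2⟩ := (hh.eventually (gt_mem_nhds hε)).exists_forall_of_atTop
    refine ⟨max N1 N2, fun N M hN hM => ?_⟩
    have e : ∀ n, avg F n = avg (a t) n + (avg (r t) n + avg h n) := by
      intro n
      rw [← avg_add, ← avg_add]
      congr 1
      exact funext (hF t)
    have e2 : avg F N - avg F M = (avg (a t) N - avg (a t) M) +
        ((avg (r t) N - avg (r t) M) + (avg h N - avg h M)) := by
      rw [e, e]; abel
    have n1 := hN1 N M (le_of_max_le_left hN) (le_of_max_le_left hM)
    have n2 := norm_sub_le (avg (r t) N) (avg (r t) M)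
    have n3 := norm_sub_le (avg h N) (avg h M)
    have n4 := avg_norm_le (r t) hε.le ht N
    have n5 := avg_norm_le (r t) hε.le ht M
    have n6 := hN2 N (le_of_max_le_right hN)
    have n7 := hN2 M (le_of_max_le_right hM)
    rw [e2]
    have n8 := norm_add_le (avg (a t) N - avg (a t) M) ((avg (r t) N - avg (r t) M) + (avg h N - avg h M))
    have n9 := norm_add_le (avg (r t) N - avg (r t) M) (avg h N - avg h M)
    linarith
  rw [Metric.tendsto_atTop]
  intro ε hε
  obtain ⟨N0, hN0⟩ := hca (ε / 10) (by positivity)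
  refine ⟨N0, fun N hN => ?_⟩
  obtain ⟨φ, h1, h2⟩ := exists_dual_vector'' ℝ (avg F N)
  have hlim : Tendsto (fun M => φ (avg F M)) atTop (𝓝 0) := by
    have := (hw φ).cesaro_smul
    refine this.congr fun n => ?_
    exact (avg_map φ.toLinearMap F n).symm
  have hle : ‖avg F N‖ ≤ 0 + 5 * (ε / 10) := by
    refine ge_of_tendsto (hlim.add_const _) ?_
    filter_upwards [eventually_ge_atTop N0] with M hM
    have h3 : ‖avg F N‖ = φ (avg F M) + φ (avg F N - avg F M) := by
      rw [map_sub, h2]; simp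
    have h4 := φ.le_opNorm (avg F N - avg F M)
    have h5 := hN0 N M hN hM
    have h6 : ‖φ‖ * ‖avg F N - avg F M‖ ≤ 1 * ‖avg F N - avg F M‖ := by
      gcongr
    have h7 := le_abs_self (φ (avg F N - avg F M))
    rw [Real.norm_eq_abs] at h4
    linarith
  rw [Real.dist_eq, sub_zero, abs_norm]
  linarith

variable {X : Type*} [NormedAddCommGroup X] [NormedSpace ℝ X]
variable {B : BFS ℝ mu01 X} {K : ℝ → ℝ → ℝ≥0∞}
variable {hK : Measurable (Function.uncurry K)}

/-- restriction of an element to a measurable set -/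
def rst (A : Set ℝ) (hA : MeasurableSet A) (f : YY B K hK) : YY B K hK :=
  ⟨A.indicator f.1, mem_indicator hK f.mem hA⟩

/-- absolute value -/
def absY (f : YY B K hK) : YY B K hK :=
  ⟨fun y => |f.1 y|, mem_of_le hK (continuous_abs.measurable.comp_aemeasurable f.aem) f.mem
    fun y => by rw [abs_abs]⟩

open Classical in
/-- sign function -/
def sg (E : ℕ → Set ℝ) (F : ℕ → ℝ → ℝ) (m : ℕ) : ℝ → ℝ := fun y =>
  (⋃ k, E (m + k) ∩ {y | 0 ≤ F (m + k) y}).indicator (fun _ => 1) y -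
    (⋃ k, E (m + k) ∩ {y | F (m + k) y < 0}).indicator (fun _ => 1) y

lemma sg_meas {E : ℕ → Set ℝ} (hE : ∀ n, MeasurableSet (E n)) {F : ℕ → ℝ → ℝ}
    (hF : ∀ n, Measurable (F n)) (m : ℕ) : Measurable (sg E F m) := by
  refine Measurable.sub (measurable_const.indicator ?_) (measurable_const.indicator ?_)
  · exact MeasurableSet.iUnion fun k => (hE _).inter (measurableSet_le measurable_const (hF _))
  · exact MeasurableSet.iUnion fun k => (hE _).inter (measurableSet_lt (hF _) measurable_const)

lemma sg_le (E : ℕ → Set ℝ) (F : ℕ → ℝ → ℝ) (m : ℕ) (y : ℝ) : |sg E F m y| ≤ 1 := by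
  classical
  simp only [sg, Set.indicator_apply]
  split_ifs <;> norm_num

lemma sg_zero {E : ℕ → Set ℝ} (F : ℕ → ℝ → ℝ) {m : ℕ} {y : ℝ} (hy : y ∉ ⋃ k, E (m + k)) :
    sg E F m y = 0 := by
  have h1 : y ∉ (⋃ k, E (m + k) ∩ {y | 0 ≤ F (m + k) y}) := by
    intro h
    obtain ⟨k, hk⟩ := Set.mem_iUnion.1 h
    exact hy (Set.mem_iUnion.2 ⟨k, hk.1⟩)
  have h2 : y ∉ (⋃ k, E (m + k) ∩ {y | F (m + k) y < 0}) := by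
    intro h
    obtain ⟨k, hk⟩ := Set.mem_iUnion.1 h
    exact hy (Set.mem_iUnion.2 ⟨k, hk.1⟩)
  unfold sg
  rw [Set.indicator_of_notMem h1, Set.indicator_of_notMem h2, sub_zero]

lemma sg_mul {E : ℕ → Set ℝ} (hd : ∀ i j, i ≠ j → Disjoint (E i) (E j)) (F : ℕ → ℝ → ℝ) {m n : ℕ}
    (hmn : m ≤ n) {y : ℝ} (hy : y ∈ E n) : sg E F m y * F n y = |F n y| := by
  have key : ∀ k, y ∈ E (m + k) → m + k = n := by
    intro k hk
    by_contra hne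
    exact Set.disjoint_left.1 (hd _ _ hne) hk hy
  obtain ⟨k, rfl⟩ := Nat.exists_eq_add_of_le hmn
  unfold sg
  rcases le_or_gt 0 (F (m + k) y) with h | h
  · have h1 : y ∈ (⋃ k, E (m + k) ∩ {y | 0 ≤ F (m + k) y}) := Set.mem_iUnion.2 ⟨k, hy, h⟩
    have h2 : y ∉ (⋃ k, E (m + k) ∩ {y | F (m + k) y < 0}) := by
      intro h'
      obtain ⟨l, hl, hl2⟩ := Set.mem_iUnion.1 h'
      have hl3 : F (m + l) y < 0 := hl2
      rw [key l hl] at hl3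
      linarith
    rw [Set.indicator_of_mem h1, Set.indicator_of_notMem h2, abs_of_nonneg h]; ring
  · have h1 : y ∈ (⋃ k, E (m + k) ∩ {y | F (m + k) y < 0}) := Set.mem_iUnion.2 ⟨k, hy, h⟩
    have h2 : y ∉ (⋃ k, E (m + k) ∩ {y | 0 ≤ F (m + k) y}) := by
      intro h'
      obtain ⟨l, hl, hl2⟩ := Set.mem_iUnion.1 h'
      have hl3 : 0 ≤ F (m + l) y := hl2
      rw [key l hl] at hl3
      linarith
    rw [Set.indicator_of_mem h1, Set.indicator_of_notMem h2, abs_of_neg h]; ring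

lemma habs_weak (hrefl : Function.Surjective (NormedSpace.inclusionInDoubleDual ℝ X))
    (hQ1 : QQ B K (fun _ => 1) ≠ ⊤) (F : ℕ → YY B K hK) (hF : ∀ n, Measurable (F n).1)
    (hw : ∀ φ : StrongDual ℝ (YY B K hK), Tendsto (fun n => φ (F n)) atTop (𝓝 0))
    (E : ℕ → Set ℝ) (hE : ∀ n, MeasurableSet (E n)) (hd : ∀ i j, i ≠ j → Disjoint (E i) (E j))
    (hUI : ∀ ε : ℝ≥0∞, 0 < ε → ∃ M : ℕ, ∀ n,
        QQ B K ({y | 2 ^ M < ab (F n).1 y ∧ y ∉ E n}.indicator (ab (F n).1)) ≤ ε)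
    (hS : ∀ ε : ℝ≥0∞, 0 < ε → ∃ m : ℕ, QQ B K ((⋃ k, E (m + k)).indicator fun _ => 1) ≤ ε)
    (ψ : StrongDual ℝ (YY B K hK)) :
    Tendsto (fun n => ψ (absY (rst (E n) (hE n) (F n)))) atTop (𝓝 0) := by
  rw [Metric.tendsto_atTop]
  intro ε hε
  have hψ : 0 ≤ ‖ψ‖ := ContinuousLinearMap.opNorm_nonneg _
  set η : ℝ := ε / (4 * (‖ψ‖ + 1)) with hη
  have hη0 : 0 < η := by positivity
  obtain ⟨M, hM⟩ := hUI (ENNReal.ofReal η) (by simpa using hη0)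
  obtain ⟨m, hm⟩ := hS (ENNReal.ofReal η / 2 ^ M) (ENNReal.div_pos (by simpa using hη0) (by simp))
  set s := sg E (fun n => (F n).1) m with hs
  have ms : Measurable s := sg_meas hE hF m
  have bs : ∀ y, |s y| ≤ 1 := sg_le _ _ _
  have h1 := hw (ψ.comp (mulc s ms bs))
  obtain ⟨N, hN⟩ := (h1.norm.eventually (gt_mem_nhds (show ‖(0:ℝ)‖ < ε / 4 by simp; positivity))).exists_forall_of_atTop
  refine ⟨max N m, fun n hn => ?_⟩
  have hnm : m ≤ n := le_of_max_le_right hn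
  have e : absY (rst (E n) (hE n) (F n)) =
      mulc s ms bs (F n) - mulc s ms bs (rst (E n)ᶜ (hE n).compl (F n)) := by
    apply Subtype.ext
    ext y
    show |(E n).indicator (F n).1 y| = s y * (F n).1 y - s y * (E n)ᶜ.indicator (F n).1 y
    by_cases hy : y ∈ E n
    · rw [Set.indicator_of_mem hy, Set.indicator_of_notMem (by simpa using hy),
        ← sg_mul hd (fun n => (F n).1) hnm hy]
      simp [hs]
    · rw [Set.indicator_of_notMem hy, Set.indicator_of_mem (by simpa using hy)]
      simp
  have mS : MeasurableSet (⋃ k, E (m + k)) := MeasurableSet.iUnion fun k => hE _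
  have hb : ‖mulc s ms bs (rst (E n)ᶜ (hE n).compl (F n))‖ ≤ η + η := by
    have h2 : ‖mulc s ms bs (rst (E n)ᶜ (hE n).compl (F n))‖ ≤
        ‖rst (⋃ k, E (m + k)) mS (rst (E n)ᶜ (hE n).compl (F n))‖ := by
      apply YY.norm_mono
      filter_upwards with y
      show |s y * (E n)ᶜ.indicator (F n).1 y| ≤
        |(⋃ k, E (m + k)).indicator ((E n)ᶜ.indicator (F n).1) y|
      by_cases hy : y ∈ ⋃ k, E (m + k)
      · rw [Set.indicator_of_mem hy, abs_mul]
        exact mul_le_of_le_one_left (abs_nonneg _) (bs y)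
      · rw [hs, sg_zero _ hy]; simp
    refine h2.trans (YY.norm_le_of (by positivity) ?_)
    have h3 := UI_AC (B := B) hrefl hK hQ1 (fun n => (F n).1) (fun n => (F n).aem) E hE mS M n
    refine h3.trans ?_
    rw [ENNReal.ofReal_add hη0.le hη0.le]
    refine add_le_add ?_ (hM n)
    calc _ ≤ 2 ^ M * (ENNReal.ofReal η / 2 ^ M) := by gcongr
      _ = _ := ENNReal.mul_div_cancel (by simp) (by simp)
  have h4 := hN n (le_of_max_le_left hn)
  have h5 := ψ.le_opNorm (mulc s ms bs (rst (E n)ᶜ (hE n).compl (F n)))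
  have h6 : ‖ψ‖ * ‖mulc s ms bs (rst (E n)ᶜ (hE n).compl (F n))‖ ≤ ε / 2 := by
    calc _ ≤ ‖ψ‖ * (η + η) := by gcongr
      _ ≤ (‖ψ‖ + 1) * (η + η) := by gcongr; linarith
      _ = ε / 2 := by rw [hη]; field_simp; ring
  rw [dist_zero_right, e, map_sub]
  have h7 := norm_sub_le (ψ (mulc s ms bs (F n))) (ψ (mulc s ms bs (rst (E n)ᶜ (hE n).compl (F n))))
  have h8 : ‖ψ (mulc s ms bs (F n))‖ < ε / 4 := h4
  linarith

end Wbs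

section WbsMain

variable {X : Type*} [NormedAddCommGroup X] [NormedSpace ℝ X]
variable {B : BFS ℝ mu01 X} {K : ℝ → ℝ → ℝ≥0∞}
variable {hK : Measurable (Function.uncurry K)}

lemma absY_apply (f : YY B K hK) (y : ℝ) : (absY f).1 y = |f.1 y| := rfl

lemma avg_coe (f : ℕ → YY B K hK) (n : ℕ) : (avg f n).1 = avg (fun k => (f k).1) n := by
  unfold avg
  rw [YY.coe_smul, YY.coe_sum]

lemma norm_avg_abs (f : ℕ → YY B K hK) (n : ℕ) :
    ‖avg f n‖ ≤ ‖avg (fun k => Lc (absY (f k))) n‖ := by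
  have h1 : avg (fun k => (Lc (absY (f k)) : X)) n = Lc (avg (fun k => absY (f k)) n) :=
    (avg_map (Lc (B := B) (K := K) (hK := hK)).toLinearMap (fun k => absY (f k)) n).symm
  have hav : ∀ y, (avg (fun k => absY (f k)) n).1 y = (n : ℝ)⁻¹ * ∑ k ∈ Finset.range n, |(f k).1 y| := by
    intro y
    rw [avg_coe, avg_fun_apply]
    rfl
  rw [h1, Lc_apply, Lop_norm_pos]
  · apply YY.norm_mono
    filter_upwards with y
    rw [hav, avg_coe, avg_fun_apply, abs_mul, abs_mul]
    exact mul_le_mul_of_nonneg_left ((Finset.abs_sum_le_sum_abs _ _).trans (le_abs_self _))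
      (abs_nonneg _)
  · intro y
    rw [hav]
    positivity

lemma main_Y (hrefl : Function.Surjective (NormedSpace.inclusionInDoubleDual ℝ X)) (hRI : B.RI)
    (hWBS : WeakBanachSaks X)
    (h1 : rho B (fun _ => 1) ≠ ⊤) (hQ1 : QQ B K (fun _ => 1) ≠ ⊤)
    (F : ℕ → YY B K hK) (hF : ∀ n, Measurable (F n).1)
    (hw : ∀ φ : StrongDual ℝ (YY B K hK), Tendsto (fun n => φ (F n)) atTop (𝓝 0)) :
    ∃ σ : ℕ → ℕ, StrictMono σ ∧ Tendsto (fun n => ‖avg (fun k => F (σ k)) n‖) atTop (𝓝 0) := by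
  obtain ⟨C, hC⟩ := weak_bounded F hw
  obtain ⟨σ, hσ, E, hE, hd, hUI, hS⟩ := split hrefl hRI h1 hK hQ1 (fun n => (F n).1)
    (fun n => (F n).aem) (ENNReal.ofReal C) ENNReal.ofReal_ne_top (fun n => by
      rw [ENNReal.le_ofReal_iff_toReal_le (F n).fin ((norm_nonneg _).trans (hC 0)), ← YY.norm_eq]
      exact hC n)
  have hw2 : ∀ φ : StrongDual ℝ (YY B K hK), Tendsto (fun n => φ (F (σ n))) atTop (𝓝 0) :=
    fun φ => (hw φ).comp hσ.tendsto_atTop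
  have hx := habs_weak hrefl hQ1 (fun n => F (σ n)) (fun n => hF _) hw2 E hE hd hUI hS
  -- truncations
  have mA : ∀ t n : ℕ, MeasurableSet {y | |(F (σ n)).1 y| ≤ (2 : ℝ) ^ t ∧ y ∉ E n} := fun t n =>
    (measurableSet_le (continuous_abs.measurable.comp (hF _)) measurable_const).inter (hE n).compl
  have mR : ∀ t n : ℕ, MeasurableSet {y | (2 : ℝ) ^ t < |(F (σ n)).1 y| ∧ y ∉ E n} := fun t n =>
    (measurableSet_lt measurable_const (continuous_abs.measurable.comp (hF _))).inter (hE n).compl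
  set a : ℕ → ℕ → YY B K hK := fun t n => rst _ (mA t n) (F (σ n)) with ha
  set r : ℕ → ℕ → YY B K hK := fun t n => rst _ (mR t n) (F (σ n)) with hr
  set h : ℕ → YY B K hK := fun n => rst (E n) (hE n) (F (σ n)) with hh
  have hdec : ∀ t n, F (σ n) = a t n + (r t n + h n) := by
    intro t n
    apply Subtype.ext
    ext y
    show (F (σ n)).1 y = Set.indicator {y | |(F (σ n)).1 y| ≤ (2 : ℝ) ^ t ∧ y ∉ E n} (F (σ n)).1 y +
      (Set.indicator {y | (2 : ℝ) ^ t < |(F (σ n)).1 y| ∧ y ∉ E n} (F (σ n)).1 y +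
        (E n).indicator (F (σ n)).1 y)
    classical
    simp only [Set.indicator_apply, Set.mem_ofPred_eq]
    by_cases hy : y ∈ E n
    · simp [hy]
    · by_cases hy2 : |(F (σ n)).1 y| ≤ (2 : ℝ) ^ t
      · simp [hy, hy2, not_lt.2 hy2]
      · simp [hy, hy2, not_le.1 hy2]
  have hr2 : ∀ ε : ℝ, 0 < ε → ∃ t, ∀ n, ‖r t n‖ ≤ ε := by
    intro ε hε
    obtain ⟨M, hM⟩ := hUI (ENNReal.ofReal ε) (by simpa using hε)
    refine ⟨M, fun n => YY.norm_le_of hε.le ((QQ_mono hK (ab_aem (r M n).aem) ?_).trans (hM n))⟩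
    filter_upwards with y
    show ENNReal.ofReal |Set.indicator {y | (2 : ℝ) ^ M < |(F (σ n)).1 y| ∧ y ∉ E n} (F (σ n)).1 y| ≤ _
    by_cases hy : y ∈ {y | (2 : ℝ) ^ M < |(F (σ n)).1 y| ∧ y ∉ E n}
    · have hy2 : (2 : ℝ) ^ M < |(F (σ n)).1 y| ∧ y ∉ E n := hy
      rw [Set.indicator_of_mem hy, Set.indicator_of_mem]
      · exact le_refl _
      · refine ⟨?_, hy2.2⟩
        show (2 : ℝ≥0∞) ^ M < ENNReal.ofReal |(F (σ n)).1 y|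
        have e : (2 : ℝ≥0∞) ^ M = ENNReal.ofReal (2 ^ M) := by
          rw [ENNReal.ofReal_pow (by norm_num)]; simp
        rw [e, ENNReal.ofReal_lt_ofReal_iff_of_nonneg (by positivity)]
        exact hy2.1
    · rw [Set.indicator_of_notMem hy]; simp
  have hab : ∀ t n y, |(a t n).1 y| ≤ (2 : ℝ) ^ t := by
    intro t n y
    show |Set.indicator {y | |(F (σ n)).1 y| ≤ (2 : ℝ) ^ t ∧ y ∉ E n} (F (σ n)).1 y| ≤ _
    by_cases hy : y ∈ {y | |(F (σ n)).1 y| ≤ (2 : ℝ) ^ t ∧ y ∉ E n}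
    · rw [Set.indicator_of_mem hy]; exact hy.1
    · rw [Set.indicator_of_notMem hy]; simp
  have ham : ∀ t n, Measurable (a t n).1 := fun t n => (hF _).indicator (mA t n)
  obtain ⟨ρ, hρ, hgram⟩ := gram_extract
    (fun t n => (memL (ham t n) (hab t n)).toLp (a t n).1) (fun t => 2 ^ t)
    (fun t n => norm_tl_le (ham t n) (hab t n))
  obtain ⟨τ, hτ, hlim⟩ := hWBS (fun n => Lc (absY (h (ρ n)))) (fun φ =>
    (hx (φ.comp Lc)).comp hρ.tendsto_atTop)
  refine ⟨fun k => σ (ρ (τ k)), hσ.comp (hρ.comp hτ), ?_⟩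
  refine final_abs (fun k => F (σ (ρ (τ k)))) (fun k => h (ρ (τ k))) (fun t k => a t (ρ (τ k)))
    (fun t k => r t (ρ (τ k))) (fun t k => hdec t _) ?_ ?_ ?_ ?_
  · intro t ε hε
    obtain ⟨c, e, he, he0, hce⟩ := hgram t
    have hc := avg_cauchy (fun k => (memL (ham t (ρ (τ k))) (hab t (ρ (τ k)))).toLp (a t (ρ (τ k))).1)
      (2 ^ t) (fun n => norm_tl_le (ham t _) (hab t _)) c (e ∘ τ) (he.comp hτ.tendsto_atTop)
      (fun i => he0 _) (fun i j hij => hce _ _ (hτ.injective.ne hij))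
    obtain ⟨N0, hN0⟩ := avg_cauchy_Y (B := B) hrefl hK hQ1 (fun k => (a t (ρ (τ k))).1)
      (fun n => ham t _) (2 ^ t) (fun n => hab t _) hc (ENNReal.ofReal ε) (by simpa using hε)
    refine ⟨N0, fun N M hN hM => YY.norm_le_of hε.le ?_⟩
    rw [YY.coe_sub, avg_coe, avg_coe]
    exact hN0 N M hN hM
  · intro ε hε
    obtain ⟨t, ht⟩ := hr2 ε hε
    exact ⟨t, fun n => ht _⟩
  · exact squeeze_zero (fun n => norm_nonneg _) (fun n => norm_avg_abs _ n) hlim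
  · exact fun φ => (hw2 φ).comp (hρ.comp hτ).tendsto_atTop

lemma norm_zero_of_ae {f : YY B K hK} (h : f.1 =ᵐ[mu01] 0) : ‖f‖ = 0 := by
  rw [YY.norm_eq, QQ_congr (v := ab 0), QQ_ab_zero]
  · simp
  · filter_upwards [h] with y hy
    simp only [ab, hy]

lemma hasWBS (hrefl : Function.Surjective (NormedSpace.inclusionInDoubleDual ℝ X)) (hRI : B.RI)
    (hWBS : WeakBanachSaks X)
    (h1 : rho B (fun _ => 1) ≠ ⊤) (hK : Measurable (Function.uncurry K))
    (hQ1 : QQ B K (fun _ => 1) ≠ ⊤) : HasWBS (memTK B K) (nrmTK B K) := by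
  intro f hmem hnull
  set f' : ℕ → YY B K hK := fun n => ⟨f n, hmem n⟩ with hf'
  have hae : ∀ n, AEMeasurable (f n) mu01 := fun n => (memTK_iff.1 (hmem n)).1
  have hmem2 : ∀ n, memTK B K ((hae n).mk (f n)) := by
    intro n
    refine memTK_iff.2 ⟨(hae n).measurable_mk.aemeasurable, ?_⟩
    rw [QQ_congr (v := ab (f n))]
    · exact (memTK_iff.1 (hmem n)).2
    · filter_upwards [(hae n).ae_eq_mk] with y hy
      simp only [ab, hy]
  set F : ℕ → YY B K hK := fun n => ⟨(hae n).mk (f n), hmem2 n⟩ with hF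
  have hz : ∀ n, ‖f' n - F n‖ = 0 := by
    intro n
    apply norm_zero_of_ae
    filter_upwards [(hae n).ae_eq_mk] with y hy
    show f n y - (hae n).mk (f n) y = 0
    rw [← hy, sub_self]
  have hw1 : ∀ φ : StrongDual ℝ (YY B K hK), Tendsto (fun n => φ (f' n)) atTop (𝓝 0) := by
    intro φ
    obtain ⟨T, hT, hT2⟩ := isBdd_of_dual φ
    exact (hnull T hT).congr fun n => hT2 (f' n)
  have hw : ∀ φ : StrongDual ℝ (YY B K hK), Tendsto (fun n => φ (F n)) atTop (𝓝 0) := by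
    intro φ
    refine (hw1 φ).congr fun n => ?_
    have h2 := φ.le_opNorm (f' n - F n)
    rw [hz, mul_zero] at h2
    have h3 := norm_le_zero_iff.1 h2
    rw [map_sub, sub_eq_zero] at h3
    exact h3
  obtain ⟨σ, hσ, hlim⟩ := main_Y hrefl hRI hWBS h1 hQ1 F (fun n => (hae n).measurable_mk) hw
  refine ⟨σ, hσ, squeeze_zero (fun n => nrmTK_nonneg _) (fun n => ?_) hlim⟩
  have e : nrmTK B K ((n : ℝ)⁻¹ • ∑ k ∈ Finset.range n, f (σ k)) = ‖avg (fun k => f' (σ k)) n‖ := by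
    rw [YY.norm_def, avg_coe]; rfl
  rw [e]
  have e2 : avg (fun k => f' (σ k)) n = avg (fun k => F (σ k)) n +
      avg (fun k => f' (σ k) - F (σ k)) n := by
    rw [← avg_add]; congr 1; ext k; simp
  have h3 := avg_norm_le (fun k => f' (σ k) - F (σ k)) le_rfl (fun k => (hz (σ k)).le) n
  rw [e2]
  have := norm_add_le (avg (fun k => F (σ k)) n) (avg (fun k => f' (σ k) - F (σ k)) n)
  linarith

end WbsMain

/-- if `X` is a reflexive rearrangement invariant space on `[0,1]` with the
weak Banach-Saks property and `K ≥ 0` is a measurable kernel with `T_K(χ_{[0,1]}) ∈ X`,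
then the optimal domain `[T_K,X]` has both the subsequence splitting property and the weak
Banach-Saks property. -/
theorem statement6
    {X : Type*} [NormedAddCommGroup X] [NormedSpace ℝ X] [CompleteSpace X]
    (B : BFS ℝ mu01 X) (hRI : B.RI)
    (hrefl : Function.Surjective (NormedSpace.inclusionInDoubleDual ℝ X))
    (hWBS : WeakBanachSaks X)
    (K : ℝ → ℝ → ℝ≥0∞) (hK : Measurable (Function.uncurry K))
    (hKone : memTK B K ((Set.Icc (0 : ℝ) 1).indicator fun _ => 1)) :
    HasSSP mu01 (memTK B K) (nrmTK B K) ∧ HasWBS (memTK B K) (nrmTK B K) := by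
  by_cases hX : ∀ x : X, x = 0
  · exact trivial_case hX
  · push Not at hX
    obtain ⟨x, hx⟩ := hX
    have h1 := rho_one_ne_top hRI hx
    have hQ1 := QQ_one_of hKone
    exact ⟨hasSSP hrefl hRI h1 hK hQ1, hasWBS hrefl hRI hWBS h1 hK hQ1⟩

end Paper
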